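/- arXiv:1610.05969 — 3 statements merged into one kernel-verified Lean document; each statement's English description precedes it below -/
import Mathlib

section
/- Estimate outside the bulk region (Lemma 4.3): fix θ with −√2 < θ < √2, R ∈ ℕ, α with −2/3 < α < −1/2, and q with 0 < q < 3/2. Set U_1^N = [−√2 + N^α, √2 − N^α] and x_θ^N = x/N + θ. Then limsup_{N→∞} sup_{|x| < R} ∫_{ℝ \ U_1^N} L^N(y,y)^q / |x_θ^N − y| dy = 0. -/
open Real MeasureTheory Filter Set

/-- Physicists' Hermite polynomial `H_n(x) = (-1)^n e^{x^2} (d/dx)^n e^{-x^2}`. -/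
noncomputable def hermiteP (n : ℕ) (x : ℝ) : ℝ :=
  (-1 : ℝ) ^ n * Real.exp (x ^ 2) * iteratedDeriv n (fun t => Real.exp (-t ^ 2)) x

/-- Oscillator wave function `ψ_n(x) = (√π 2^n n!)^{-1/2} e^{-x^2/2} H_n(x)`. -/
noncomputable def osc (n : ℕ) (x : ℝ) : ℝ :=
  (Real.sqrt (Real.sqrt Real.pi * 2 ^ n * (n.factorial : ℝ)))⁻¹ *
    Real.exp (-x ^ 2 / 2) * hermiteP n x

/-- The kernel `K^N(x,y) = Σ_{k=0}^{N-1} ψ_k(x) ψ_k(y)`. -/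
noncomputable def kerK (N : ℕ) (x y : ℝ) : ℝ :=
  ∑ k ∈ Finset.range N, osc k x * osc k y

/-- The rescaled kernel `L^N(x,y) = N^{-1/2} K^N(√N x, √N y)`. -/
noncomputable def kerL (N : ℕ) (x y : ℝ) : ℝ :=
  (Real.sqrt (N : ℝ))⁻¹ * kerK N (Real.sqrt (N : ℝ) * x) (Real.sqrt (N : ℝ) * y)

noncomputable def gD (n : ℕ) (x : ℝ) : ℝ := iteratedDeriv n (fun t => Real.exp (-t ^ 2)) x

lemma gD_hasDeriv (n : ℕ) (x : ℝ) : HasDerivAt (gD n) (gD (n+1) x) x := by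
  have hc : ContDiff ℝ (n+1 : ℕ) (fun t : ℝ => Real.exp (-t ^ 2)) := by fun_prop
  have h : DifferentiableAt ℝ (iteratedDeriv n (fun t : ℝ => Real.exp (-t ^ 2))) x :=
    (hc.differentiable_iteratedDeriv n (by exact_mod_cast Nat.lt_succ_self n)) x
  have := h.hasDerivAt
  rw [← iteratedDeriv_succ] at this
  exact this

lemma gD_zero (x : ℝ) : gD 0 x = Real.exp (-x ^ 2) := by simp [gD]

lemma gD_one (x : ℝ) : gD 1 x = -2 * x * Real.exp (-x ^ 2) := by
  have h1 := gD_hasDeriv 0 x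
  have h2 : HasDerivAt (gD 0) (Real.exp (-x ^ 2) * (-(2 * x))) x := by
    have : gD 0 = fun x => Real.exp (-x ^ 2) := funext gD_zero
    rw [this]
    have := ((hasDerivAt_pow 2 x).neg).exp
    simpa using this
  have := h1.unique h2
  simp only [zero_add] at this
  rw [this]; ring

lemma gD_rec (n : ℕ) : ∀ x : ℝ, gD (n+2) x = -2 * x * gD (n+1) x - 2 * (n+1) * gD n x := by
  induction n with
  | zero =>
    intro x
    have h1 := gD_hasDeriv 1 x
    have h2 : HasDerivAt (gD 1) ((-2) * gD 0 x + (-2 * x) * gD 1 x) x := by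
      have : gD 1 = fun x => (-2 * x) * gD 0 x := by
        funext y; rw [gD_one, gD_zero]
      have h3 := ((hasDerivAt_id x).const_mul (-2)).mul (gD_hasDeriv 0 x)
      have h4 := h3.congr_of_eventuallyEq (f₁ := gD 1)
        (Eventually.of_forall fun y => congrFun this y)
      refine h4.congr_deriv ?_
      simp
    have := h1.unique h2
    simp only [zero_add, Nat.cast_zero] at *
    rw [show (2:ℕ) = 1 + 1 from rfl, this]; ring
  | succ n ih =>
    intro x
    have h1 := gD_hasDeriv (n+2) x
    have h2 : HasDerivAt (gD (n+2)) ((-2) * gD (n+1) x + (-2 * x) * gD (n+2) x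
        - 2 * (n+1) * gD (n+1) x) x := by
      have : gD (n+2) = fun x => (-2 * x) * gD (n+1) x - 2 * (n+1) * gD n x := funext ih
      have h3 := (((hasDerivAt_id x).const_mul (-2)).mul (gD_hasDeriv (n+1) x)).sub
        ((gD_hasDeriv n x).const_mul (2 * ((n:ℝ)+1)))
      have h4 := h3.congr_of_eventuallyEq (f₁ := gD (n+2))
        (Eventually.of_forall fun y => congrFun this y)
      refine h4.congr_deriv ?_
      simp
    have := h1.unique h2
    rw [show n + 1 + 2 = n + 2 + 1 from rfl, this]; push_cast; ring

/-- normalising constant -/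
noncomputable def cO (n : ℕ) : ℝ := (Real.sqrt (Real.sqrt Real.pi * 2 ^ n * (n.factorial : ℝ)))⁻¹

lemma cO_succ (n : ℕ) : cO n = Real.sqrt (2 * (n+1)) * cO (n+1) := by
  unfold cO
  have h : Real.sqrt Real.pi * 2 ^ (n+1) * ((n+1).factorial : ℝ) =
      (2 * (n+1)) * (Real.sqrt Real.pi * 2 ^ n * (n.factorial : ℝ)) := by
    rw [Nat.factorial_succ]; push_cast; ring
  rw [h, Real.sqrt_mul (show (0:ℝ) ≤ 2 * ((n:ℝ)+1) by positivity)]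
  have : Real.sqrt (2 * ((n:ℝ)+1)) ≠ 0 := by positivity
  rw [mul_inv, ← mul_assoc, mul_inv_cancel₀ this, one_mul]

lemma osc_eq (n : ℕ) (x : ℝ) : osc n x = cO n * (-1) ^ n * (Real.exp (x ^ 2 / 2) * gD n x) := by
  unfold osc hermiteP cO gD
  have : Real.exp (x^2/2) = Real.exp (-x^2/2) * Real.exp (x^2) := by
    rw [← Real.exp_add]; ring_nf
  rw [this]; ring

lemma osc_deriv (n : ℕ) (x : ℝ) :
    HasDerivAt (osc n) (x * osc n x - Real.sqrt (2 * (n+1)) * osc (n+1) x) x := by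
  have : osc n = fun x => cO n * (-1) ^ n * (Real.exp (x ^ 2 / 2) * gD n x) := funext (osc_eq n)
  have he : HasDerivAt (fun x : ℝ => Real.exp (x^2/2)) (Real.exp (x^2/2) * x) x := by
    have := ((hasDerivAt_pow 2 x).div_const 2).exp
    simpa using this
  have h := (he.mul (gD_hasDeriv n x)).const_mul (cO n * (-1)^n)
  rw [osc_eq n, osc_eq (n+1), this]
  refine h.congr_deriv ?_
  rw [cO_succ n, pow_succ]; ring

lemma osc_rec (n : ℕ) (x : ℝ) : Real.sqrt (2 * ((n+1 : ℕ)+1)) * osc (n+2) x =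
    2 * x * osc (n+1) x - Real.sqrt (2 * (n+1)) * osc n x := by
  rw [osc_eq, osc_eq, osc_eq, gD_rec, cO_succ n, cO_succ (n+1)]
  have h := Real.mul_self_sqrt (show (0:ℝ) ≤ 2 * (n+1) by positivity)
  push_cast at *
  simp only [pow_succ _ n, pow_succ _ (n+1)]
  linear_combination (√(2 * (↑n + 1 + 1)) * cO (n+2) * (-1)^n * rexp (x^2/2) * gD n x) * h

lemma osc_zero (x : ℝ) : osc 0 x = cO 0 * Real.exp (-x^2/2) := by
  simp [osc, cO, hermiteP, ← Real.exp_add]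

lemma osc_one (x : ℝ) : Real.sqrt 2 * osc 1 x = 2 * x * osc 0 x := by
  rw [osc_eq, osc_eq, gD_one, gD_zero, cO_succ 0]; simp; ring

/-- `a_n = √(2n) ψ_n ψ_{n-1}` -/
noncomputable def aO (n : ℕ) (x : ℝ) : ℝ := Real.sqrt (2 * n) * osc n x * osc (n-1) x

lemma aO_succ (n : ℕ) (x : ℝ) : aO (n+1) x = Real.sqrt (2 * (n+1)) * osc (n+1) x * osc n x := by
  simp [aO]

lemma aO_add (n : ℕ) (x : ℝ) : aO n x + aO (n+1) x = 2 * x * osc n x ^ 2 := by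
  cases n with
  | zero =>
    have := osc_one x
    rw [aO_succ]; simp [aO]; linear_combination osc 0 x * this
  | succ n =>
    have := osc_rec n x
    rw [aO_succ, aO_succ]; linear_combination osc (n+1) x * this

lemma osc_sq_deriv (n : ℕ) (x : ℝ) :
    HasDerivAt (fun x => osc n x ^ 2) (aO n x - aO (n+1) x) x := by
  have h := (osc_deriv n x).pow 2
  refine h.congr_deriv ?_
  have := aO_add n x
  rw [aO_succ] at *
  simp only [Nat.cast_ofNat, Nat.add_one_sub_one, pow_one]
  linear_combination -this

lemma osc_succ_deriv (n : ℕ) (x : ℝ) :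
    HasDerivAt (osc (n+1)) (Real.sqrt (2 * (n+1)) * osc n x - x * osc (n+1) x) x := by
  convert osc_deriv (n+1) x using 1
  linear_combination osc_rec n x

lemma osc_prod_deriv (n : ℕ) (x : ℝ) :
    HasDerivAt (fun x => osc n x * osc (n+1) x)
      (Real.sqrt (2 * (n+1)) * (osc n x ^ 2 - osc (n+1) x ^ 2)) x := by
  refine ((osc_deriv n x).mul (osc_succ_deriv n x)).congr_deriv ?_
  ring

lemma osc_continuous (n : ℕ) : Continuous (osc n) :=
  continuous_iff_continuousAt.2 fun x => (osc_deriv n x).continuousAt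

lemma pow_exp_bound (k : ℕ) : ∃ C : ℝ, ∀ x : ℝ, |x| ^ k * Real.exp (-x^2/2) ≤ C * Real.exp (-x^2/4) := by
  refine ⟨(k.factorial : ℝ) * Real.exp 1, fun x => ?_⟩
  have h1 := Real.pow_div_factorial_le_exp |x| (abs_nonneg x) k
  rw [div_le_iff₀ (by positivity)] at h1
  have h2 : Real.exp |x| * Real.exp (-x^2/2) ≤ Real.exp 1 * Real.exp (-x^2/4) := by
    rw [← Real.exp_add, ← Real.exp_add]
    apply Real.exp_le_exp.2
    nlinarith [sq_nonneg (|x| - 2), sq_abs x]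
  calc |x| ^ k * Real.exp (-x^2/2) ≤ (Real.exp |x| * k.factorial) * Real.exp (-x^2/2) := by gcongr
    _ = k.factorial * (Real.exp |x| * Real.exp (-x^2/2)) := by ring
    _ ≤ k.factorial * (Real.exp 1 * Real.exp (-x^2/4)) := by gcongr
    _ = _ := by ring

lemma osc_bound_aux (n : ℕ) :
    (∀ k : ℕ, ∃ C : ℝ, ∀ x : ℝ, |x| ^ k * |osc n x| ≤ C * Real.exp (-x^2/4)) ∧
    (∀ k : ℕ, ∃ C : ℝ, ∀ x : ℝ, |x| ^ k * |osc (n+1) x| ≤ C * Real.exp (-x^2/4)) := by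
  induction n with
  | zero =>
    have h0 : ∀ k : ℕ, ∃ C : ℝ, ∀ x : ℝ, |x| ^ k * |osc 0 x| ≤ C * Real.exp (-x^2/4) := by
      intro k
      obtain ⟨C, hC⟩ := pow_exp_bound k
      refine ⟨|cO 0| * C, fun x => ?_⟩
      rw [osc_zero, abs_mul, abs_of_pos (Real.exp_pos _)]
      have := mul_le_mul_of_nonneg_left (hC x) (abs_nonneg (cO 0))
      linarith
    refine ⟨h0, fun k => ?_⟩
    obtain ⟨C, hC⟩ := h0 (k+1)
    refine ⟨2 / Real.sqrt 2 * C, fun x => ?_⟩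
    have h2 : osc 1 x = 2 / Real.sqrt 2 * (x * osc 0 x) := by
      have := osc_one x
      field_simp; linarith
    simp only [zero_add]
    rw [h2, abs_mul, abs_mul, abs_of_pos (show 0 < 2 / Real.sqrt 2 by positivity)]
    have := mul_le_mul_of_nonneg_left (hC x) (show 0 ≤ 2 / Real.sqrt 2 by positivity)
    rw [pow_succ] at this
    linarith
  | succ n ih =>
    refine ⟨ih.2, fun k => ?_⟩
    obtain ⟨C1, h1⟩ := ih.1 k
    obtain ⟨C2, h2⟩ := ih.2 (k+1)
    set b := Real.sqrt (2 * ((n+1 : ℕ)+1)) with hb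
    have hbp : 0 < b := by positivity
    set d := Real.sqrt (2 * ((n:ℝ)+1)) with hd
    have hdp : 0 ≤ d := by positivity
    refine ⟨(2 * C2 + d * C1) / b, fun x => ?_⟩
    have h := osc_rec n x
    rw [← hb, ← hd] at h
    have h3 : b * |osc (n+2) x| ≤ 2 * |x| * |osc (n+1) x| + d * |osc n x| := by
      rw [← abs_of_pos hbp, ← abs_mul, h]
      refine (abs_sub _ _).trans (le_of_eq ?_)
      rw [abs_mul, abs_mul, abs_mul, abs_of_nonneg hdp]; simp
    rw [div_mul_eq_mul_div, le_div_iff₀ hbp]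
    have h4 := mul_le_mul_of_nonneg_left h3 (pow_nonneg (abs_nonneg x) k)
    have h5 := mul_le_mul_of_nonneg_left (h1 x) hdp
    have h6 := h2 x
    rw [pow_succ] at h6
    show |x| ^ k * |osc (n+2) x| * b ≤ _
    nlinarith

lemma osc_bound (n : ℕ) : ∃ C : ℝ, ∀ x : ℝ, |osc n x| ≤ C * Real.exp (-x^2/4) := by
  simpa using (osc_bound_aux n).1 0

lemma exp_integrable (b : ℝ) (hb : 0 < b) : Integrable (fun x : ℝ => Real.exp (-x^2 / b)) := by
  have := integrable_exp_neg_mul_sq (b := 1/b) (by positivity)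
  convert this using 3
  ring

lemma osc_mul_bound (n m : ℕ) : ∃ C : ℝ, ∀ x : ℝ, |osc n x * osc m x| ≤ C * Real.exp (-x^2/2) := by
  obtain ⟨C, hC⟩ := osc_bound n
  obtain ⟨D, hD⟩ := osc_bound m
  refine ⟨C * D, fun x => ?_⟩
  rw [abs_mul]
  calc _ ≤ (C * Real.exp (-x^2/4)) * (D * Real.exp (-x^2/4)) :=
        mul_le_mul (hC x) (hD x) (abs_nonneg _) ((abs_nonneg _).trans (hC x))
    _ = C * D * (Real.exp (-x^2/4) * Real.exp (-x^2/4)) := by ring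
    _ = _ := by rw [← Real.exp_add]; ring_nf

lemma osc_mul_integrable (n m : ℕ) : Integrable (fun x => osc n x * osc m x) := by
  obtain ⟨C, hC⟩ := osc_mul_bound n m
  exact ((exp_integrable 2 (by norm_num)).const_mul C).mono'
    ((osc_continuous n).mul (osc_continuous m)).aestronglyMeasurable
    (Eventually.of_forall hC)

lemma exp_tendsto_top : Tendsto (fun x : ℝ => Real.exp (-x^2/2)) atTop (nhds 0) := by
  apply Real.tendsto_exp_atBot.comp
  have h : Tendsto (fun x : ℝ => x^2 * 2⁻¹) atTop atTop :=
    (tendsto_pow_atTop (by norm_num)).atTop_mul_const (by norm_num)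
  refine (tendsto_neg_atTop_atBot.comp h).congr fun x => ?_
  simp; ring

lemma exp_tendsto_bot : Tendsto (fun x : ℝ => Real.exp (-x^2/2)) atBot (nhds 0) := by
  refine (exp_tendsto_top.comp tendsto_neg_atBot_atTop).congr fun x => ?_
  simp

lemma osc_mul_tendsto_top (n m : ℕ) : Tendsto (fun x => osc n x * osc m x) atTop (nhds 0) := by
  obtain ⟨C, hC⟩ := osc_mul_bound n m
  refine squeeze_zero_norm hC ?_
  simpa using exp_tendsto_top.const_mul C

lemma osc_mul_tendsto_bot (n m : ℕ) : Tendsto (fun x => osc n x * osc m x) atBot (nhds 0) := by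
  obtain ⟨C, hC⟩ := osc_mul_bound n m
  refine squeeze_zero_norm hC ?_
  simpa using exp_tendsto_bot.const_mul C

lemma osc_sq_integrable (n : ℕ) : Integrable (fun x => osc n x ^ 2) := by
  simpa [sq] using osc_mul_integrable n n

lemma osc_norm (n : ℕ) : ∫ x, osc n x ^ 2 = 1 := by
  induction n with
  | zero =>
    have : ∀ x, osc 0 x ^ 2 = (Real.sqrt Real.pi)⁻¹ * Real.exp (-1 * x^2) := by
      intro x
      rw [osc_zero, mul_pow, ← Real.exp_nat_mul]
      congr 1
      · simp [cO]
      · congr 1; push_cast; ring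
    simp_rw [this]
    rw [integral_const_mul, integral_gaussian]
    simp only [div_one]
    exact inv_mul_cancel₀ (by positivity)
  | succ n ih =>
    have h := integral_of_hasDerivAt_of_tendsto (fun x => osc_prod_deriv n x)
      (((osc_sq_integrable n).sub (osc_sq_integrable (n+1))).const_mul _)
      (osc_mul_tendsto_bot n (n+1)) (osc_mul_tendsto_top n (n+1))
    rw [integral_const_mul, integral_sub (osc_sq_integrable n) (osc_sq_integrable (n+1)), ih] at h
    have hb : Real.sqrt (2 * ((n:ℝ)+1)) ≠ 0 := by positivity
    have := (mul_eq_zero.1 (h.trans (sub_self 0))).resolve_left hb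
    linarith

/-- diagonal kernel -/
noncomputable def dK (N : ℕ) (x : ℝ) : ℝ := ∑ k ∈ Finset.range N, osc k x ^ 2

lemma dK_deriv (N : ℕ) (x : ℝ) : HasDerivAt (dK N) (- aO N x) x := by
  induction N with
  | zero =>
    have : dK 0 = fun _ => 0 := by funext; simp [dK]
    rw [this]; simpa [aO] using hasDerivAt_const x (0:ℝ)
  | succ N ih =>
    have : dK (N+1) = fun x => dK N x + osc N x ^ 2 := by
      funext; simp [dK, Finset.sum_range_succ]
    rw [this]
    refine (ih.add (osc_sq_deriv N x)).congr_deriv ?_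
    ring

lemma dK_le (N : ℕ) (x : ℝ) : dK N x ≤ Real.sqrt (2 * N) := by
  have hi : Integrable (fun x => - aO N x) := by
    have := ((osc_mul_integrable N (N-1)).const_mul (Real.sqrt (2*N))).neg
    convert this using 2 
    simp [aO, mul_assoc]
  have ht : Tendsto (dK N) atTop (nhds 0) := by
    have : Tendsto (dK N) atTop (nhds (∑ k ∈ Finset.range N, (0:ℝ))) := by
      apply tendsto_finsetSum
      intro i _
      simpa [sq] using osc_mul_tendsto_top i i
    simpa using this
  have h := integral_Ioi_of_hasDerivAt_of_tendsto' (a := x) (fun y _ => dK_deriv N y)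
    hi.integrableOn ht
  have h2 : dK N x = ∫ y in Ioi x, aO N y := by
    rw [integral_neg] at h; linarith
  rw [h2]
  have h3 : Integrable (fun y => Real.sqrt (2*N) * (1/2 * (osc N y ^ 2 + osc (N-1) y ^ 2))) :=
    (((osc_sq_integrable N).add (osc_sq_integrable (N-1))).const_mul _).const_mul _
  have hle : ∀ y, aO N y ≤ Real.sqrt (2*N) * (1/2 * (osc N y ^ 2 + osc (N-1) y ^ 2)) := by
    intro y
    rw [aO, mul_assoc]
    apply mul_le_mul_of_nonneg_left _ (Real.sqrt_nonneg _)
    nlinarith [sq_nonneg (osc N y - osc (N-1) y)]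
  calc ∫ y in Ioi x, aO N y ≤ ∫ y in Ioi x, Real.sqrt (2*N) * (1/2 * (osc N y ^ 2 + osc (N-1) y ^ 2)) := by
        apply setIntegral_mono _ h3.integrableOn hle
        have := hi.neg.integrableOn (s := Ioi x)
        simpa using this
    _ ≤ ∫ y, Real.sqrt (2*N) * (1/2 * (osc N y ^ 2 + osc (N-1) y ^ 2)) := by
        apply setIntegral_le_integral h3
        exact Eventually.of_forall fun y => by positivity
    _ = Real.sqrt (2*N) := by
        rw [integral_const_mul, integral_const_mul, integral_add (osc_sq_integrable N) (osc_sq_integrable (N-1)),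
          osc_norm, osc_norm]
        norm_num

lemma sqrt_two_mul_le (n : ℕ) : Real.sqrt (2 * ((n:ℝ)+1)) ≤ 2 * ((n:ℝ)+1) := by
  rw [Real.sqrt_le_left (by positivity)]
  nlinarith [(Nat.cast_nonneg n : (0:ℝ) ≤ n)]

lemma osc_sq_le (n : ℕ) (x : ℝ) : osc n x ^ 2 ≤ Real.sqrt (2 * ((n:ℝ)+1)) := by
  have h := dK_le (n+1) x
  have h2 : osc n x ^ 2 ≤ dK (n+1) x := by
    unfold dK
    exact Finset.single_le_sum (f := fun k => osc k x ^ 2) (fun i _ => sq_nonneg _)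
      (Finset.mem_range.2 (Nat.lt_succ_self n))
  push_cast at h
  linarith

lemma aO_abs_le (n : ℕ) (x : ℝ) : |aO n x| ≤ 2 * ((n:ℝ)+1) := by
  cases n with
  | zero => simp [aO]
  | succ n =>
    have h1 := osc_sq_le n x
    have h2 := osc_sq_le (n+1) x
    push_cast at h2 ⊢
    have h3 : Real.sqrt (2 * ((n:ℝ)+1)) ≤ Real.sqrt (2 * ((n:ℝ)+1+1)) := Real.sqrt_le_sqrt (by linarith)
    have h4 : |osc (n+1) x * osc n x| ≤ Real.sqrt (2 * ((n:ℝ)+1+1)) := by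
      rw [abs_le]
      constructor <;> nlinarith [sq_nonneg (osc (n+1) x - osc n x), sq_nonneg (osc (n+1) x + osc n x)]
    rw [aO_succ, mul_assoc, abs_mul, abs_of_nonneg (Real.sqrt_nonneg _)]
    calc _ ≤ Real.sqrt (2 * ((n:ℝ)+1+1)) * Real.sqrt (2 * ((n:ℝ)+1+1)) := by gcongr
      _ = _ := Real.mul_self_sqrt (by positivity)

/-- weighted diagonal kernel -/
noncomputable def gK (t : ℝ) (N : ℕ) (x : ℝ) : ℝ := ∑ k ∈ Finset.range N, t ^ k * osc k x ^ 2

lemma gK_deriv (t : ℝ) (ht : 0 < t) (N : ℕ) (x : ℝ) : HasDerivAt (gK t N)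
    (-(2 * ((1-t)/(1+t)) * x * gK t N x) - 2/(1+t) * t^N * aO N x) x := by
  induction N with
  | zero =>
    have : gK t 0 = fun _ => 0 := by funext; simp [gK]
    rw [this]; simpa [aO] using hasDerivAt_const x (0:ℝ)
  | succ N ih =>
    have : gK t (N+1) = fun x => gK t N x + t^N * osc N x ^ 2 := by
      funext; simp [gK, Finset.sum_range_succ]
    rw [this]
    refine (ih.add ((osc_sq_deriv N x).const_mul (t^N))).congr_deriv ?_
    have h := aO_add N x
    have h1 : (1+t) ≠ 0 := by positivity
    field_simp
    rw [pow_succ]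
    linear_combination (t-1) * t^N * h

lemma gK_exp_le (t : ℝ) (ht : 0 < t) (ht1 : t < 1) (N : ℕ) (x : ℝ) :
    gK t N x * Real.exp ((1-t)/(1+t) * x^2) ≤
      gK t N 0 + 4 * ((N:ℝ)+1) * t^N * Real.exp ((1-t)/(1+t) * x^2) * |x| := by
  set u := (1-t)/(1+t) with hu
  have hup : 0 ≤ u := div_nonneg (by linarith) (by linarith)
  have hd : ∀ z, HasDerivAt (fun z => gK t N z * Real.exp (u * z^2))
      (-(2/(1+t) * t^N * aO N z * Real.exp (u * z^2))) z := by
    intro z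
    have he : HasDerivAt (fun z : ℝ => Real.exp (u * z^2)) (Real.exp (u * z^2) * (u * (2 * z))) z := by
      have := ((hasDerivAt_pow 2 z).const_mul u).exp
      simpa using this
    refine ((gK_deriv t ht N z).mul he).congr_deriv ?_
    rw [← hu]; ring
  have hmv := Convex.norm_image_sub_le_of_norm_hasDerivWithin_le
    (f := fun z => gK t N z * Real.exp (u * z^2)) (s := Set.uIcc 0 x) (x := 0) (y := x)
    (C := 4 * ((N:ℝ)+1) * t^N * Real.exp (u * x^2))
    (fun z _ => (hd z).hasDerivWithinAt) (by
      intro z hz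
      have hzx : z^2 ≤ x^2 := by
        rw [sq_le_sq]
        have := Set.abs_sub_left_of_mem_uIcc hz
        simpa using this
      rw [norm_neg, Real.norm_eq_abs, abs_mul, abs_mul, abs_of_pos (Real.exp_pos _),
        abs_of_pos (show 0 < 2/(1+t) * t^N by positivity)]
      have h1 : 2/(1+t) ≤ 2 := by
        rw [div_le_iff₀ (by linarith)]; linarith
      have h2 := aO_abs_le N z
      have h3 : Real.exp (u * z^2) ≤ Real.exp (u * x^2) := by gcongr
      calc _ ≤ 2 * t^N * (2 * ((N:ℝ)+1)) * Real.exp (u * x^2) := by gcongr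
        _ = _ := by ring) (convex_uIcc 0 x) Set.left_mem_uIcc Set.right_mem_uIcc
  have := (le_abs_self _).trans hmv
  simp at this
  linarith

lemma gK_bound (t : ℝ) (ht : 0 < t) (ht1 : t < 1) : ∃ C : ℝ, 0 < C ∧ ∀ (N : ℕ) (x : ℝ),
    gK t N x * Real.exp ((1-t)/(1+t) * x^2) ≤ C := by
  have hn : ‖t‖ < 1 := by rw [Real.norm_eq_abs, abs_of_pos ht]; exact ht1
  have hs : Summable (fun n : ℕ => t^n * (2 * ((n:ℝ)+1))) := by
    have h1 := summable_pow_mul_geometric_of_norm_lt_one 1 hn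
    have h0 := summable_pow_mul_geometric_of_norm_lt_one 0 hn
    refine ((h1.add h0).mul_left 2).congr fun n => ?_
    simp; ring
  have h0 : ∀ N, gK t N 0 ≤ ∑' n : ℕ, t^n * (2 * ((n:ℝ)+1)) := by
    intro N
    refine le_trans ?_ (hs.sum_le_tsum (Finset.range N) (fun i _ => by positivity))
    unfold gK
    gcongr with i _
    exact (osc_sq_le i 0).trans (sqrt_two_mul_le i)
  set C := ∑' n : ℕ, t^n * (2 * ((n:ℝ)+1)) with hC
  refine ⟨C + 1, ?_, fun N x => ?_⟩
  · have := h0 0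
    simp [gK] at this
    linarith
  · have hlim : Tendsto (fun M : ℕ => C + (t^M * (2 * ((M:ℝ)+1))) *
        (2 * Real.exp ((1-t)/(1+t) * x^2) * |x|)) atTop (nhds (C + 0 *
        (2 * Real.exp ((1-t)/(1+t) * x^2) * |x|))) :=
      tendsto_const_nhds.add (hs.tendsto_atTop_zero.mul_const _)
    have := ge_of_tendsto hlim (b := gK t N x * Real.exp ((1-t)/(1+t) * x^2)) (by
      filter_upwards [eventually_ge_atTop N] with M hM
      have h1 := gK_exp_le t ht ht1 M x
      have h2 := h0 M
      have h3 : gK t N x ≤ gK t M x := by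
        unfold gK
        exact Finset.sum_le_sum_of_subset_of_nonneg (Finset.range_mono hM)
          (fun i _ _ => by positivity)
      have h4 := mul_le_mul_of_nonneg_right h3 (Real.exp_pos ((1-t)/(1+t) * x^2)).le
      linarith)
    linarith

lemma kerL_eq (N : ℕ) (y : ℝ) : kerL N y y = (Real.sqrt N)⁻¹ * dK N (Real.sqrt N * y) := by
  simp [kerL, kerK, dK, sq]

lemma dK_nonneg (N : ℕ) (y : ℝ) : 0 ≤ dK N y := Finset.sum_nonneg fun _ _ => sq_nonneg _

lemma kerL_nonneg (N : ℕ) (y : ℝ) : 0 ≤ kerL N y y := by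
  rw [kerL_eq]; exact mul_nonneg (by positivity) (dK_nonneg _ _)

lemma kerL_le_two (N : ℕ) (hN : 1 ≤ N) (y : ℝ) : kerL N y y ≤ 2 := by
  rw [kerL_eq]
  have h := dK_le N (Real.sqrt N * y)
  have hN' : (1:ℝ) ≤ N := by exact_mod_cast hN
  have hs : 0 < Real.sqrt N := Real.sqrt_pos.2 (by linarith)
  rw [Real.sqrt_mul (by norm_num)] at h
  rw [inv_mul_le_iff₀ hs]
  have : Real.sqrt 2 ≤ 2 := by rw [Real.sqrt_le_left (by norm_num)]; norm_num
  nlinarith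

lemma kerL_tail (s : ℝ) (hs : 0 < s) : ∃ C : ℝ, 0 < C ∧ ∃ c : ℝ, 0 < c ∧ ∀ (N : ℕ), 1 ≤ N →
    ∀ y : ℝ, 2 + 2 * s ≤ y^2 → kerL N y y ≤ C * Real.exp (- (c * N) * y^2) := by
  obtain ⟨C, hC, h⟩ := gK_bound (1/(1+s)) (by positivity)
    (by rw [div_lt_one (by positivity)]; linarith)
  refine ⟨C, hC, s^2/((2+s)*(2+2*s)), by positivity, fun N hN y hy => ?_⟩
  have hN' : (1:ℝ) ≤ N := by exact_mod_cast hN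
  have hu : (1 - 1/(1+s)) / (1 + 1/(1+s)) = s/(2+s) := by field_simp; ring
  have h1 := h N (Real.sqrt N * y)
  rw [hu, mul_pow, Real.sq_sqrt (by positivity)] at h1
  have h2 : dK N (Real.sqrt N * y) ≤ (1+s)^N * gK (1/(1+s)) N (Real.sqrt N * y) := by
    unfold dK gK
    rw [Finset.mul_sum]
    apply Finset.sum_le_sum
    intro i hi
    rw [← mul_assoc]
    apply le_mul_of_one_le_left (sq_nonneg _)
    rw [one_div, inv_pow, ← div_eq_mul_inv, one_le_div (by positivity)]
    exact pow_le_pow_right₀ (by linarith) (Finset.mem_range.1 hi).le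
  have h3 : (1+s)^N ≤ Real.exp (N * s) := by
    rw [Real.exp_nat_mul]
    gcongr
    linarith [Real.add_one_le_exp s]
  have h4 : dK N (Real.sqrt N * y) ≤ C * Real.exp (N * s - s/(2+s) * (N * y^2)) := by
    have hg : 0 ≤ gK (1/(1+s)) N (Real.sqrt N * y) :=
      Finset.sum_nonneg fun i _ => by positivity
    have h5 : gK (1/(1+s)) N (Real.sqrt N * y) ≤ C * Real.exp (- (s/(2+s) * (N * y^2))) := by
      rw [Real.exp_neg, ← div_eq_mul_inv, le_div_iff₀ (Real.exp_pos _)]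
      exact h1
    calc _ ≤ (1+s)^N * gK (1/(1+s)) N (Real.sqrt N * y) := h2
      _ ≤ Real.exp (N * s) * (C * Real.exp (- (s/(2+s) * (N * y^2)))) := by gcongr
      _ = C * (Real.exp (N * s) * Real.exp (- (s/(2+s) * (N * y^2)))) := by ring
      _ = _ := by rw [← Real.exp_add, sub_eq_add_neg]
  have h6 : N * s - s/(2+s) * (N * y^2) ≤ - (s^2/((2+s)*(2+2*s)) * N) * y^2 := by
    have : (- (s^2/((2+s)*(2+2*s)) * N) * y^2) - (N * s - s/(2+s) * (N * y^2))
        = N * s * (y^2 - (2 + 2*s)) / (2+2*s) := by field_simp; ring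
    have h7 : 0 ≤ N * s * (y^2 - (2 + 2*s)) / (2+2*s) := by
      have : 0 ≤ y^2 - (2+2*s) := by linarith
      positivity
    linarith
  have h8 : (Real.sqrt N)⁻¹ ≤ 1 := inv_le_one_of_one_le₀ (Real.one_le_sqrt.2 hN')
  rw [kerL_eq]
  calc _ ≤ 1 * dK N (Real.sqrt N * y) := by
        apply mul_le_mul_of_nonneg_right h8 (dK_nonneg _ _)
    _ = dK N (Real.sqrt N * y) := one_mul _
    _ ≤ _ := h4
    _ ≤ _ := by gcongr

/-- Estimate outside the bulk region (Lemma 4.3):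
`limsup_{N→∞} sup_{|x|<R} ∫_{ℝ \ U_1^N} L^N(y,y)^q / |x_θ^N - y| dy = 0`. -/
theorem outside_bulk_estimate (θ : ℝ) (hθ1 : -Real.sqrt 2 < θ) (hθ2 : θ < Real.sqrt 2)
    (R : ℕ) (hR : 1 ≤ R) (α q : ℝ) (hα1 : -2/3 < α) (hα2 : α < -1/2)
    (hq1 : 0 < q) (hq2 : q < 3/2) :
    ∀ ε : ℝ, 0 < ε → ∃ N0 : ℕ, ∀ N : ℕ, N0 ≤ N → ∀ x : ℝ, |x| < (R : ℝ) →
      (∫ y in Set.univ \ Set.Icc (-Real.sqrt 2 + (N : ℝ) ^ α) (Real.sqrt 2 - (N : ℝ) ^ α),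
        kerL N y y ^ q / |x / (N : ℝ) + θ - y|) < ε := by
  intro ε hε
  obtain ⟨δ, hδ, hδ1, hδ2⟩ : ∃ δ : ℝ, 0 < δ ∧ 3 * δ ≤ Real.sqrt 2 - θ ∧ 3 * δ ≤ θ + Real.sqrt 2 := by
    refine ⟨min (Real.sqrt 2 - θ) (θ + Real.sqrt 2) / 3, ?_, ?_, ?_⟩
    · have : 0 < min (Real.sqrt 2 - θ) (θ + Real.sqrt 2) := lt_min (by linarith) (by linarith)
      positivity
    · linarith [min_le_left (Real.sqrt 2 - θ) (θ + Real.sqrt 2)]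
    · linarith [min_le_right (Real.sqrt 2 - θ) (θ + Real.sqrt 2)]
  set M : ℝ := 2 ^ q with hM
  have hMp : 0 < M := by positivity
  set s : ℝ := ε * δ / (8 * M) with hs
  have hsp : 0 < s := by positivity
  obtain ⟨C, hC, c, hc, htail⟩ := kerL_tail s hsp
  have hlim1 : Tendsto (fun N : ℕ => (N:ℝ) ^ α) atTop (nhds 0) := by
    have := (tendsto_rpow_neg_atTop (show 0 < -α by linarith)).comp (tendsto_natCast_atTop_atTop (R := ℝ))
    refine this.congr fun N => ?_
    simp
  have hlim2 : Tendsto (fun N : ℕ => (R:ℝ) / N) atTop (nhds 0) :=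
    tendsto_const_div_atTop_nhds_zero_nat _
  have hlim3 : Tendsto (fun N : ℕ => C ^ q * Real.sqrt (Real.pi / (c * q) / N)) atTop (nhds 0) := by
    have h := (Real.continuous_sqrt.tendsto 0).comp
      (tendsto_const_div_atTop_nhds_zero_nat (Real.pi / (c * q)))
    simpa using h.const_mul (C ^ q)
  have hev : ∀ᶠ N : ℕ in atTop, 1 ≤ N ∧ (N:ℝ) ^ α < δ ∧ (N:ℝ) ^ α < s ∧ (R:ℝ) / N < δ ∧
      C ^ q * Real.sqrt (Real.pi / (c * q) / N) < ε * δ / 4 := by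
    filter_upwards [eventually_ge_atTop 1, hlim1.eventually_lt_const hδ,
      hlim1.eventually_lt_const hsp, hlim2.eventually_lt_const hδ,
      hlim3.eventually_lt_const (show 0 < ε * δ / 4 by positivity)] with N h1 h2 h3 h4 h5
    exact ⟨h1, h2, h3, h4, h5⟩
  obtain ⟨N0, hN0⟩ := eventually_atTop.1 hev
  refine ⟨N0, fun N hN x hx => ?_⟩
  obtain ⟨hN1, ha1, ha2, hRN, hgauss⟩ := hN0 N hN
  have hNp : (0:ℝ) < N := by exact_mod_cast hN1
  set a : ℝ := (N:ℝ) ^ α with ha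
  have hap : 0 < a := by positivity
  have hxN : |x / N| < δ := by
    rw [abs_div, abs_of_pos hNp]
    exact lt_of_le_of_lt (by gcongr) hRN
  rw [abs_lt] at hxN
  set S : Set ℝ := Set.univ \ Set.Icc (-Real.sqrt 2 + a) (Real.sqrt 2 - a) with hS
  have hSm : MeasurableSet S := MeasurableSet.univ.diff measurableSet_Icc
  set I1 : Set ℝ := Set.Icc (Real.sqrt 2 - a) (Real.sqrt 2 + s) with hI1
  set I2 : Set ℝ := Set.Icc (-Real.sqrt 2 - s) (-Real.sqrt 2 + a) with hI2
  set E : ℝ → ℝ := fun y => Real.exp (-(c * q * N) * y^2) with hE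
  set g : ℝ → ℝ := fun y => δ⁻¹ * ((I1.indicator (fun _ => M) y + I2.indicator (fun _ => M) y)
    + C ^ q * E y) with hg
  have hi1 : Integrable (I1.indicator (fun _ => M)) :=
    (integrable_indicator_iff measurableSet_Icc).2 (by simp)
  have hi2 : Integrable (I2.indicator (fun _ => M)) :=
    (integrable_indicator_iff measurableSet_Icc).2 (by simp)
  have hiE : Integrable E := integrable_exp_neg_mul_sq (by positivity)
  have hgi : Integrable g := ((hi1.add hi2).add (hiE.const_mul _)).const_mul _
  have hn1 : ∀ y, 0 ≤ I1.indicator (fun _ => M) y := Set.indicator_nonneg (fun _ _ => hMp.le)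
  have hn2 : ∀ y, 0 ≤ I2.indicator (fun _ => M) y := Set.indicator_nonneg (fun _ _ => hMp.le)
  have hgn : ∀ y, 0 ≤ g y := by
    intro y
    have := hn1 y
    have := hn2 y
    simp only [hg, hE]
    positivity
  have hle : ∀ y, S.indicator (fun y => kerL N y y ^ q / |x / (N : ℝ) + θ - y|) y ≤ g y := by
    intro y
    by_cases hy : y ∈ S
    swap
    · rw [Set.indicator_of_notMem hy]; exact hgn y
    rw [Set.indicator_of_mem hy]
    have hy' : y < -Real.sqrt 2 + a ∨ Real.sqrt 2 - a < y := by
      by_contra hcon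
      push Not at hcon
      exact hy.2 ⟨hcon.1, hcon.2⟩
    have hdist : δ ≤ |x / (N : ℝ) + θ - y| := by
      rcases hy' with h | h
      · exact le_trans (by linarith [hxN.1]) (le_abs_self _)
      · exact le_trans (by linarith [hxN.2]) (neg_le_abs _)
    have hk0 := kerL_nonneg N y
    have hkq : 0 ≤ kerL N y y ^ q := Real.rpow_nonneg hk0 q
    have hnum : kerL N y y ^ q ≤ (I1.indicator (fun _ => M) y + I2.indicator (fun _ => M) y)
        + C ^ q * E y := by
      have hEy : 0 ≤ C ^ q * E y := by simp only [hE]; positivity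
      have hkM : kerL N y y ^ q ≤ M := Real.rpow_le_rpow hk0 (kerL_le_two N hN1 y) hq1.le
      have h2 : (1:ℝ) ≤ Real.sqrt 2 := Real.one_le_sqrt.2 (by norm_num)
      have h22 : Real.sqrt 2 ^ 2 = 2 := Real.sq_sqrt (by norm_num)
      by_cases h1 : y ∈ I1
      · rw [Set.indicator_of_mem h1]; linarith [hn2 y]
      by_cases h3 : y ∈ I2
      · rw [Set.indicator_of_mem h3]; linarith [hn1 y]
      have hysq : 2 + 2 * s ≤ y^2 := by
        rcases hy' with h | h
        · have : y < -Real.sqrt 2 - s := by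
            by_contra hcon
            exact h3 ⟨not_lt.1 hcon, h.le⟩
          nlinarith
        · have : Real.sqrt 2 + s < y := by
            by_contra hcon
            exact h1 ⟨h.le, not_lt.1 hcon⟩
          nlinarith
      have h4 : kerL N y y ^ q ≤ C ^ q * E y := by
        calc _ ≤ (C * Real.exp (- (c * N) * y^2)) ^ q :=
              Real.rpow_le_rpow hk0 (htail N hN1 y hysq) hq1.le
          _ = C ^ q * E y := by
              rw [Real.mul_rpow hC.le (Real.exp_pos _).le, ← Real.exp_mul]
              simp only [hE]
              congr 2
              ring
      linarith [hn1 y, hn2 y]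
    calc _ ≤ kerL N y y ^ q / δ := by gcongr
      _ = δ⁻¹ * kerL N y y ^ q := by rw [div_eq_mul_inv, mul_comm]
      _ ≤ g y := by
        simp only [hg]
        gcongr
  rw [← integral_indicator hSm]
  have hint : ∫ y, g y = δ⁻¹ * ((M * (s + a) + M * (s + a)) + C ^ q * Real.sqrt (Real.pi / (c * q) / N)) := by
    simp only [hg]
    have hi12 : Integrable (fun y => I1.indicator (fun _ => M) y + I2.indicator (fun _ => M) y) := hi1.add hi2
    rw [integral_const_mul, integral_add hi12 (hiE.const_mul _), integral_add hi1 hi2,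
      integral_const_mul, integral_indicator measurableSet_Icc, integral_indicator measurableSet_Icc]
    simp only [hE]
    rw [integral_gaussian, setIntegral_const, setIntegral_const, Real.volume_real_Icc_of_le (by linarith),
      Real.volume_real_Icc_of_le (by linarith), div_div]
    simp only [smul_eq_mul]
    ring
  have hMs : M * s = ε * δ / 8 := by rw [hs]; field_simp
  have hMa : M * a ≤ M * s := by gcongr
  calc _ ≤ ∫ y, g y := by
        apply integral_mono_of_nonneg _ hgi (Eventually.of_forall hle)
        refine Eventually.of_forall fun y => Set.indicator_nonneg (fun z _ => ?_) y
        exact div_nonneg (Real.rpow_nonneg (kerL_nonneg N z) q) (abs_nonneg _)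
    _ = _ := hint
    _ < ε := by
      rw [inv_mul_lt_iff₀ hδ]
      have : 0 < ε * δ := by positivity
      nlinarith
end

section
/- Drift cancellation estimate (Lemma 4.4): fix θ with −√2 < θ < √2 and R ∈ ℕ. For x ∈ ℝ, N ≥ 1, and r > 0 write x_θ^N = x/N + θ and T^N_{r,∞}(x) = { y ∈ ℝ : r/N ≤ |x_θ^N − y| }. Then lim_{r→∞} limsup_{N→∞} sup_{|x| < R} | ∫_{T^N_{r,∞}(x)} L^N(y,y)/(x_θ^N − y) dy − θ | = 0. -/
open Real MeasureTheory Filter Set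

namespace DriftAux

/-- Hermite polynomials as polynomials. -/
noncomputable def pH : ℕ → Polynomial ℝ
  | 0 => 1
  | n + 1 => Polynomial.C 2 * Polynomial.X * pH n - Polynomial.derivative (pH n)

lemma iter_eq (n : ℕ) : iteratedDeriv n (fun t : ℝ => Real.exp (-t ^ 2)) =
    fun x => (-1 : ℝ) ^ n * (pH n).eval x * Real.exp (-x ^ 2) := by
  induction n with
  | zero => funext x; simp [pH]
  | succ n ih =>
    rw [iteratedDeriv_succ, ih]
    funext x
    have h1 : HasDerivAt (fun x : ℝ => Real.exp (-x ^ 2)) (Real.exp (-x ^ 2) * (-(2 * x))) x := by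
      have := ((hasDerivAt_pow 2 x).neg).exp
      simpa using this
    have h2 := (((pH n).hasDerivAt x).const_mul ((-1 : ℝ) ^ n)).mul h1
    have h3 := h2.deriv
    rw [show (fun x => (-1 : ℝ) ^ n * (pH n).eval x * Real.exp (-x ^ 2)) =
      (fun y => (-1 : ℝ) ^ n * (pH n).eval y) * (fun x => Real.exp (-x ^ 2)) from rfl, h3]
    simp [pH]
    ring

lemma hermiteP_eq (n : ℕ) (x : ℝ) : hermiteP n x = (pH n).eval x := by
  unfold hermiteP
  rw [iter_eq]
  have h : Real.exp (x ^ 2) * Real.exp (-x ^ 2) = 1 := by rw [← Real.exp_add]; simp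
  have h2 : (-1 : ℝ) ^ n * (-1 : ℝ) ^ n = 1 := by rw [← mul_pow]; simp
  calc _ = ((-1 : ℝ) ^ n * (-1 : ℝ) ^ n) * (Real.exp (x ^ 2) * Real.exp (-x ^ 2)) *
      (pH n).eval x := by ring
    _ = _ := by rw [h, h2]; ring

/-- Normalising constant. -/
noncomputable def cO (n : ℕ) : ℝ := (Real.sqrt (Real.sqrt Real.pi * 2 ^ n * (n.factorial : ℝ)))⁻¹

lemma osc_eq (n : ℕ) (x : ℝ) : osc n x = cO n * Real.exp (-x ^ 2 / 2) * (pH n).eval x := by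
  unfold osc cO; rw [hermiteP_eq]

/-- The ladder constant. -/
noncomputable def sq (n : ℕ) : ℝ := Real.sqrt (2 * ((n : ℝ) + 1))

lemma sq_pos (n : ℕ) : 0 < sq n := Real.sqrt_pos.2 (by positivity)

lemma sq_sq (n : ℕ) : sq n * sq n = 2 * ((n : ℝ) + 1) := Real.mul_self_sqrt (by positivity)

lemma cO_succ (n : ℕ) : cO n = sq n * cO (n + 1) := by
  unfold cO sq
  have h : Real.sqrt Real.pi * 2 ^ (n + 1) * ((n + 1).factorial : ℝ) =
      (2 * ((n : ℝ) + 1)) * (Real.sqrt Real.pi * 2 ^ n * (n.factorial : ℝ)) := by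
    rw [Nat.factorial_succ]; push_cast; ring
  rw [h, Real.sqrt_mul (by positivity : (0:ℝ) ≤ 2 * ((n : ℝ) + 1)), mul_inv (Real.sqrt (2 * ((n : ℝ) + 1))),
    ← mul_assoc, mul_inv_cancel₀, one_mul]
  exact (Real.sqrt_pos.2 (by positivity)).ne'

lemma pH_deriv (n : ℕ) : Polynomial.derivative (pH (n + 1)) =
    Polynomial.C (2 * ((n : ℝ) + 1)) * pH n := by
  induction n with
  | zero => simp [pH]
  | succ n ih =>
    have h1 : Polynomial.derivative (pH (n + 2)) = Polynomial.C 2 * pH (n + 1) +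
        Polynomial.C 2 * Polynomial.X * Polynomial.derivative (pH (n + 1))
          - Polynomial.derivative (Polynomial.derivative (pH (n + 1))) := by
      conv_lhs => rw [pH]
      simp
    rw [h1, ih, Polynomial.derivative_C_mul]
    have h2 : pH (n + 1) = Polynomial.C 2 * Polynomial.X * pH n - Polynomial.derivative (pH n) := rfl
    have h3 : Polynomial.derivative (pH n) = Polynomial.C 2 * Polynomial.X * pH n - pH (n + 1) := by
      rw [h2]; ring
    rw [h3]
    simp only [map_mul, map_add, Nat.cast_add, Nat.cast_one, map_one]
    ring

lemma osc_hd (n : ℕ) (x : ℝ) : HasDerivAt (osc n) (cO n * Real.exp (-x ^ 2 / 2) *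
    (Polynomial.derivative (pH n)).eval x - x * osc n x) x := by
  have h1 : HasDerivAt (fun x : ℝ => Real.exp (-x ^ 2 / 2)) (Real.exp (-x ^ 2 / 2) * (-x)) x := by
    have := (((hasDerivAt_pow 2 x).neg).div_const 2).exp
    refine this.congr_deriv ?_
    simp
    ring
  have h2 := (h1.const_mul (cO n)).mul ((pH n).hasDerivAt x)
  have h3 : osc n = (fun y => cO n * Real.exp (-y ^ 2 / 2)) * fun y => (pH n).eval y := by
    funext y; rw [osc_eq]; rfl
  rw [osc_eq, h3]
  refine h2.congr_deriv ?_
  ring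

lemma osc_down (n : ℕ) (x : ℝ) :
    HasDerivAt (osc (n + 1)) (sq n * osc n x - x * osc (n + 1) x) x := by
  convert osc_hd (n + 1) x using 2
  rw [osc_eq, pH_deriv, cO_succ]
  simp only [Polynomial.eval_mul, Polynomial.eval_C, ← sq_sq]
  ring

lemma osc_up (n : ℕ) (x : ℝ) :
    HasDerivAt (osc n) (x * osc n x - sq n * osc (n + 1) x) x := by
  convert osc_hd n x using 1
  have h3 : (Polynomial.derivative (pH n)).eval x = 2 * x * (pH n).eval x - (pH (n + 1)).eval x := by
    simp [pH]
  rw [osc_eq, osc_eq, h3, cO_succ]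
  ring

lemma osc_rec (n : ℕ) (x : ℝ) :
    sq (n + 1) * osc (n + 2) x = 2 * x * osc (n + 1) x - sq n * osc n x := by
  have := (osc_down n x).unique (osc_up (n + 1) x)
  linarith

lemma osc_one (x : ℝ) : sq 0 * osc 1 x = 2 * x * osc 0 x := by
  have := (osc_hd 0 x).unique (osc_up 0 x)
  simp [pH] at this
  linarith

lemma kerK_eq (n : ℕ) (x : ℝ) : kerK (n + 1) x x =
    ((n : ℝ) + 1) * (osc (n + 1) x ^ 2 + osc n x ^ 2) - sq n * x * osc (n + 1) x * osc n x := by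
  induction n with
  | zero =>
    have h := osc_one x
    have h2 := sq_sq 0
    simp [kerK] at h2 ⊢
    have : osc 1 x ^ 2 = sq 0 * x * osc 1 x * osc 0 x := by
      have : (2:ℝ) * osc 1 x ^ 2 = (sq 0 * osc 1 x) * (sq 0 * osc 1 x) := by
        rw [show (sq 0 * osc 1 x) * (sq 0 * osc 1 x) = sq 0 * sq 0 * osc 1 x ^ 2 by ring, h2]
      have h4 : (sq 0 * osc 1 x) * (sq 0 * osc 1 x) = (sq 0 * osc 1 x) * (2 * x * osc 0 x) := by rw [h]
      linarith
    linarith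
  | succ n ih =>
    have h : kerK (n + 1 + 1) x x = kerK (n + 1) x x + osc (n + 1) x * osc (n + 1) x := by
      unfold kerK; rw [Finset.sum_range_succ]
    rw [h, ih]
    have h1 := osc_rec n x
    have h2 := sq_sq n
    have h3 := sq_sq (n + 1)
    push_cast at *
    generalize osc (n + 1 + 1) x = A at *
    have e1 : ((n : ℝ) + 1 + 1) * A ^ 2 = (sq (n+1) * A) ^ 2 / 2 := by
      rw [show (sq (n+1) * A) ^ 2 = sq (n+1) * sq (n+1) * A ^ 2 by ring, h3]; ring
    have e2 : ((n : ℝ) + 1) * osc n x ^ 2 = (sq n * osc n x) ^ 2 / 2 := by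
      rw [show (sq n * osc n x) ^ 2 = sq n * sq n * osc n x ^ 2 by ring, h2]; ring
    have h1' : sq (n + 1) * A = 2 * x * osc (n + 1) x - sq n * osc n x := h1
    have e3 : sq (n+1) * x * A * osc (n + 1) x = (sq (n+1) * A) * (x * osc (n+1) x) := by ring
    rw [e3, mul_add, mul_add, e1, e2, h1']
    ring

lemma osc_zero_bound (n : ℕ) : osc n 0 ^ 2 ≤ 1 / Real.sqrt ((n : ℝ) + 1) := by
  induction n using Nat.strong_induction_on with
  | _ n ih =>
  match n, ih with
  | 0, _ =>
    rw [osc_eq]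
    simp [pH, cO]
    apply inv_le_one_of_one_le₀
    rw [Real.one_le_sqrt]
    linarith [Real.pi_gt_three]
  | 1, _ =>
    have h := osc_one 0
    have : osc 1 0 = 0 := by
      have h3 := sq_pos 0
      simp at h
      rcases h with h | h
      · linarith
      · exact h
    rw [this]; simp only [ne_eq, OfNat.ofNat_ne_zero, not_false_eq_true, zero_pow]; positivity
  | n + 2, ih =>
    have h := osc_rec n 0
    have h0 := ih n (by omega)
    have h2 := sq_sq n
    have h3 := sq_sq (n + 1)
    push_cast at *
    have e1 : ((n:ℝ) + 2) * osc (n + 2) 0 ^ 2 = ((n:ℝ) + 1) * osc n 0 ^ 2 := by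
      have e2 : (sq (n+1) * osc (n+2) 0) ^ 2 = (sq n * osc n 0) ^ 2 := by rw [h]; ring
      have e3 : (sq (n+1) * osc (n+2) 0) ^ 2 = sq (n+1) * sq (n+1) * osc (n+2) 0 ^ 2 := by ring
      have e4 : (sq n * osc n 0) ^ 2 = sq n * sq n * osc n 0 ^ 2 := by ring
      rw [e3, e4, h2, h3] at e2
      linarith
    have p1 : 0 < Real.sqrt ((n:ℝ) + 1) := Real.sqrt_pos.2 (by positivity)
    have p3 : 0 < Real.sqrt ((n:ℝ) + 2 + 1) := Real.sqrt_pos.2 (by positivity)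
    have q1 : Real.sqrt ((n:ℝ) + 1) * Real.sqrt ((n:ℝ) + 1) = n + 1 := Real.mul_self_sqrt (by positivity)
    have q2 : Real.sqrt ((n:ℝ) + 1) * Real.sqrt ((n:ℝ) + 2 + 1) ≤ n + 2 := by
      rw [← Real.sqrt_mul (by positivity)]
      apply Real.sqrt_le_iff.2
      constructor
      · positivity
      · nlinarith
    rw [le_div_iff₀ p1] at h0
    rw [le_div_iff₀ p3]
    have hn : (0:ℝ) < n + 2 := by positivity
    have : ((n:ℝ) + 2) * (osc (n + 2) 0 ^ 2 * Real.sqrt ((n:ℝ) + 2 + 1)) ≤ ((n:ℝ) + 2) * 1 := by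
      calc _ = (((n:ℝ) + 1) * osc n 0 ^ 2) * Real.sqrt ((n:ℝ) + 2 + 1) := by rw [← e1]; ring
        _ = (osc n 0 ^ 2 * Real.sqrt ((n:ℝ) + 1)) * (Real.sqrt ((n:ℝ) + 1) * Real.sqrt ((n:ℝ) + 2 + 1)) := by
            nth_rewrite 1 [← q1]; ring
        _ ≤ 1 * (n + 2) := by
            apply mul_le_mul h0 q2 (by positivity) (by norm_num)
        _ = _ := by ring
    exact le_of_mul_le_mul_left this hn

/-- energy -/
noncomputable def En (n : ℕ) (x : ℝ) : ℝ :=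
  (x * osc n x - sq n * osc (n + 1) x) ^ 2 + (2 * n + 1 - x ^ 2) * osc n x ^ 2

lemma En_hd (n : ℕ) (x : ℝ) : HasDerivAt (En n) (-2 * x * osc n x ^ 2) x := by
  have h1 := osc_up n x
  have h2 := osc_down n x
  have h3 := (((hasDerivAt_id' x).mul h1).sub (h2.const_mul (sq n))).pow 2
  have h4 := (((hasDerivAt_pow 2 x).const_sub (2 * (n:ℝ) + 1))).mul (h1.pow 2)
  have h5 := h3.add h4
  refine HasDerivAt.congr_deriv (f' := _) (h5.congr_of_eventuallyEq ?_) ?_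
  · exact Filter.Eventually.of_forall fun y => by simp [En]
  · simp
    have := sq_sq n
    generalize sq n = s at *
    have e : (n:ℝ) = s * s / 2 - 1 := by linarith
    rw [e]; ring

lemma En_le (n : ℕ) (x : ℝ) : En n x ≤ En n 0 := by
  have hd : Differentiable ℝ (En n) := fun x => (En_hd n x).differentiableAt
  rcases le_total 0 x with h | h
  · have : AntitoneOn (En n) (Ici 0) := by
      apply antitoneOn_of_deriv_nonpos (convex_Ici 0) hd.continuous.continuousOn hd.differentiableOn
      intro y hy
      rw [interior_Ici] at hy
      rw [(En_hd n y).deriv]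
      have : 0 < y := hy
      have := mul_nonneg this.le (sq_nonneg (osc n y))
      linarith
    exact this (mem_Ici.2 le_rfl) (mem_Ici.2 h) h
  · have : MonotoneOn (En n) (Iic 0) := by
      apply monotoneOn_of_deriv_nonneg (convex_Iic 0) hd.continuous.continuousOn hd.differentiableOn
      intro y hy
      rw [interior_Iic] at hy
      rw [(En_hd n y).deriv]
      have : y < 0 := hy
      have := mul_nonneg (neg_pos.2 this).le (sq_nonneg (osc n y))
      linarith
    exact this (mem_Iic.2 h) (mem_Iic.2 le_rfl) h

lemma osc_bound (n : ℕ) (x : ℝ) : (2 * n + 1 - x ^ 2) * osc n x ^ 2 ≤ 4 * Real.sqrt ((n:ℝ) + 1) := by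
  have h0 : (2 * n + 1 - x ^ 2) * osc n x ^ 2 ≤ En n x := by
    unfold En; nlinarith [sq_nonneg (x * osc n x - sq n * osc (n + 1) x)]
  refine h0.trans ((En_le n x).trans ?_)
  have e : En n 0 = 2 * ((n:ℝ) + 1) * osc (n + 1) 0 ^ 2 + (2 * n + 1) * osc n 0 ^ 2 := by
    unfold En; rw [← sq_sq]; ring
  rw [e]
  have b0 := osc_zero_bound n
  have b1 := osc_zero_bound (n + 1)
  have p1 : 0 < Real.sqrt ((n:ℝ) + 1) := Real.sqrt_pos.2 (by positivity)
  have q1 : Real.sqrt ((n:ℝ) + 1) * Real.sqrt ((n:ℝ) + 1) = n + 1 := Real.mul_self_sqrt (by positivity)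
  have b2 : 1 / Real.sqrt (((n + 1 : ℕ):ℝ) + 1) ≤ 1 / Real.sqrt ((n:ℝ) + 1) := by
    apply one_div_le_one_div_of_le p1
    apply Real.sqrt_le_sqrt
    push_cast; linarith
  have b3 := b1.trans b2
  have q2 : ((n:ℝ) + 1) * (1 / Real.sqrt ((n:ℝ) + 1)) = Real.sqrt ((n:ℝ) + 1) := by
    rw [mul_one_div, div_eq_iff p1.ne', q1]
  have hn : (0:ℝ) ≤ n := by positivity
  have c1 := mul_le_mul_of_nonneg_left b3 (by positivity : (0:ℝ) ≤ (n:ℝ) + 1)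
  have c0 := mul_le_mul_of_nonneg_left b0 (by positivity : (0:ℝ) ≤ (n:ℝ) + 1)
  rw [q2] at c1 c0
  nlinarith [sq_nonneg (osc n 0)]

lemma osc_neg (n : ℕ) (x : ℝ) : osc n (-x) = (-1) ^ n * osc n x := by
  induction n using Nat.strong_induction_on with
  | _ n ih =>
  match n, ih with
  | 0, _ => rw [osc_eq, osc_eq]; simp [pH]
  | 1, ih =>
    have h := osc_one x
    have h' := osc_one (-x)
    rw [ih 0 (by norm_num)] at h'
    apply mul_left_cancel₀ (sq_pos 0).ne'
    linear_combination h' + h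
  | n + 2, ih =>
    have h := osc_rec n x
    have h' := osc_rec n (-x)
    rw [ih n (by omega), ih (n + 1) (by omega)] at h'
    apply mul_left_cancel₀ (sq_pos (n + 1)).ne'
    rw [h', pow_add, pow_add]
    linear_combination - (-1) ^ n * h

lemma kerL_even (N : ℕ) (y : ℝ) : kerL N (-y) (-y) = kerL N y y := by
  unfold kerL kerK
  congr 1
  apply Finset.sum_congr rfl
  intro k _
  rw [mul_neg, osc_neg]
  have : ((-1 : ℝ) ^ k) * (-1) ^ k = 1 := by rw [← mul_pow]; simp
  linear_combination (osc k (√N * y)) ^ 2 * this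

lemma kerL_nonneg (N : ℕ) (y : ℝ) : 0 ≤ kerL N y y := by
  unfold kerL kerK
  apply mul_nonneg (by positivity)
  exact Finset.sum_nonneg fun k _ => mul_self_nonneg _

lemma poly_int (q : Polynomial ℝ) : Integrable (fun x : ℝ => q.eval x * Real.exp (-x ^ 2)) := by
  induction q using Polynomial.induction_on' with
  | add p q hp hq =>
    simp only [Polynomial.eval_add, add_mul]
    exact hp.add hq
  | monomial n a =>
    have h := integrable_rpow_mul_exp_neg_mul_sq (b := 1) one_pos (s := n)
      (by have : (0:ℝ) ≤ n := by positivity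
          linarith)
    have h2 := h.const_mul a
    refine h2.congr (Filter.Eventually.of_forall fun x => ?_)
    simp [mul_assoc]

lemma osc_int (n m j : ℕ) : Integrable (fun x : ℝ => x ^ j * (osc n x * osc m x)) := by
  have h := (poly_int (Polynomial.X ^ j * (pH n * pH m))).const_mul (cO n * cO m)
  refine h.congr (Filter.Eventually.of_forall fun x => ?_)
  have e : Real.exp (-x ^ 2) = Real.exp (-x ^ 2 / 2) * Real.exp (-x ^ 2 / 2) := by
    rw [← Real.exp_add]; congr 1; ring
  simp only [osc_eq, Polynomial.eval_mul, Polynomial.eval_pow, Polynomial.eval_X, e]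
  ring

lemma osc_norm (n : ℕ) : ∫ x : ℝ, osc n x * osc n x = 1 := by
  induction n with
  | zero =>
    have e : ∀ x : ℝ, osc 0 x * osc 0 x = (cO 0 * cO 0) * Real.exp (-1 * x ^ 2) := by
      intro x
      have e : Real.exp (-1 * x ^ 2) = Real.exp (-x ^ 2 / 2) * Real.exp (-x ^ 2 / 2) := by
        rw [← Real.exp_add]; congr 1; ring
      rw [osc_eq, e]; simp [pH]; ring
    simp_rw [e]
    rw [integral_const_mul, integral_gaussian]
    have : 0 < √π := Real.sqrt_pos.2 Real.pi_pos
    simp only [cO, pow_zero, Nat.factorial_zero, Nat.cast_one, mul_one, div_one]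
    rw [← mul_inv, Real.mul_self_sqrt this.le, inv_mul_cancel₀ this.ne']
  | succ n ih =>
    have hd : ∀ x, HasDerivAt (fun x => osc n x * osc (n + 1) x)
        (sq n * (osc n x * osc n x) - sq n * (osc (n + 1) x * osc (n + 1) x)) x := by
      intro x
      refine ((osc_up n x).mul (osc_down n x)).congr_deriv ?_
      ring
    have i0 : Integrable fun x => osc n x * osc n x := by simpa using osc_int n n 0
    have i1 : Integrable fun x => osc (n+1) x * osc (n+1) x := by simpa using osc_int (n+1) (n+1) 0
    have i2 : Integrable fun x => osc n x * osc (n+1) x := by simpa using osc_int n (n+1) 0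
    have := integral_eq_zero_of_hasDerivAt_of_integrable hd
      ((i0.const_mul _).sub (i1.const_mul _)) i2
    rw [integral_sub (i0.const_mul _) (i1.const_mul _), integral_const_mul, integral_const_mul, ih] at this
    have h := sq_pos n
    have h2 : sq n * ∫ x : ℝ, osc (n+1) x * osc (n+1) x = sq n * 1 := by linarith
    exact mul_left_cancel₀ h.ne' h2

lemma kerL_int (N : ℕ) (hN : 1 ≤ N) (j : ℕ) : Integrable (fun y : ℝ => y ^ j * kerL N y y) := by
  have hs : 0 < √(N:ℝ) := Real.sqrt_pos.2 (by exact_mod_cast hN)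
  have h : Integrable (fun x : ℝ => x ^ j * kerK N x x) := by
    unfold kerK
    simp_rw [Finset.mul_sum]
    exact integrable_finsetSum _ fun k _ => osc_int k k j
  have h2 := (h.comp_mul_left' hs.ne').const_mul ((√(N:ℝ))⁻¹ * ((√(N:ℝ))⁻¹) ^ j)
  refine h2.congr (Filter.Eventually.of_forall fun y => ?_)
  simp only [kerL, mul_pow]
  have : ((√(N:ℝ))⁻¹) ^ j * (√(N:ℝ)) ^ j = 1 := by rw [← mul_pow, inv_mul_cancel₀ hs.ne', one_pow]
  linear_combination (√(N:ℝ))⁻¹ * y ^ j * kerK N (√↑N * y) (√↑N * y) * this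

lemma kerL_integral (N : ℕ) (hN : 1 ≤ N) : ∫ y : ℝ, kerL N y y = 1 := by
  have hN' : (0:ℝ) < N := by exact_mod_cast hN
  have hs : 0 < √(N:ℝ) := Real.sqrt_pos.2 hN'
  unfold kerL
  rw [integral_const_mul, Measure.integral_comp_mul_left (fun x => kerK N x x)]
  have : ∫ x : ℝ, kerK N x x = N := by
    unfold kerK
    rw [integral_finsetSum _ (fun k _ => by simpa using osc_int k k 0)]
    simp [osc_norm]
  rw [this, abs_of_pos (by positivity), smul_eq_mul, ← mul_assoc, ← mul_inv, Real.mul_self_sqrt hN'.le,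
    inv_mul_cancel₀ hN'.ne']

/-- scaled functions, index `N = n + 1` -/
noncomputable def fa (n : ℕ) (y : ℝ) : ℝ := osc (n + 1) (√((n:ℝ) + 1) * y)
/-- scaled functions, index `N - 1 = n` -/
noncomputable def fb (n : ℕ) (y : ℝ) : ℝ := osc n (√((n:ℝ) + 1) * y)

lemma sq_eq (n : ℕ) : sq n = √2 * √((n:ℝ) + 1) := by
  unfold sq; rw [Real.sqrt_mul (by norm_num)]

lemma s_sq (n : ℕ) : √((n:ℝ) + 1) * √((n:ℝ) + 1) = n + 1 := Real.mul_self_sqrt (by positivity)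

lemma fa_hd (n : ℕ) (y : ℝ) : HasDerivAt (fa n) ((n + 1) * (√2 * fb n y - y * fa n y)) y := by
  have h := (osc_down n (√((n:ℝ) + 1) * y)).comp y ((hasDerivAt_id' y).const_mul (√((n:ℝ) + 1)))
  refine h.congr_deriv ?_
  simp only [fa, fb, sq_eq]
  linear_combination (√2 * osc n (√((n:ℝ) + 1) * y) - y * osc (n+1) (√((n:ℝ) + 1) * y)) * s_sq n

lemma fb_hd (n : ℕ) (y : ℝ) : HasDerivAt (fb n) ((n + 1) * (y * fb n y - √2 * fa n y)) y := by
  have h := (osc_up n (√((n:ℝ) + 1) * y)).comp y ((hasDerivAt_id' y).const_mul (√((n:ℝ) + 1)))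
  refine h.congr_deriv ?_
  simp only [fa, fb, sq_eq]
  linear_combination (- √2 * osc (n+1) (√((n:ℝ) + 1) * y) + y * osc n (√((n:ℝ) + 1) * y)) * s_sq n

lemma kerL_eq (n : ℕ) (y : ℝ) : kerL (n + 1) y y =
    √((n:ℝ) + 1) * (fa n y ^ 2 + fb n y ^ 2 - √2 * y * fa n y * fb n y) := by
  have hs : 0 < √((n:ℝ)+1) := Real.sqrt_pos.2 (by positivity)
  unfold kerL
  rw [kerK_eq]
  push_cast
  simp only [fa, fb, sq_eq]
  rw [inv_mul_eq_iff_eq_mul₀ hs.ne']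
  generalize osc (n+1) (√((n:ℝ) + 1) * y) = A
  generalize osc n (√((n:ℝ) + 1) * y) = B
  linear_combination (-(A ^ 2 + B ^ 2)) * s_sq n

lemma two_sq : √2 * √2 = (2:ℝ) := Real.mul_self_sqrt (by norm_num)

/-- first derivative -/
noncomputable def L1 (n : ℕ) (y : ℝ) : ℝ := -√2 * √((n:ℝ) + 1) * (fa n y * fb n y)
/-- second derivative -/
noncomputable def L2 (n : ℕ) (y : ℝ) : ℝ := 2 * (n + 1) * √((n:ℝ) + 1) * (fa n y * fa n y - fb n y * fb n y)

lemma kerL_hd (n : ℕ) (y : ℝ) : HasDerivAt (fun y => kerL (n + 1) y y) (L1 n y) y := by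
  have h : (fun y => kerL (n + 1) y y) = fun y =>
    √((n:ℝ) + 1) * (fa n y ^ 2 + fb n y ^ 2 - √2 * y * fa n y * fb n y) := by
    funext y; exact kerL_eq n y
  rw [h]
  have ha := fa_hd n y
  have hb := fb_hd n y
  have := (((ha.pow 2).add (hb.pow 2)).sub ((((hasDerivAt_id' y).const_mul √2).mul ha).mul hb)).const_mul
    (√((n:ℝ) + 1))
  refine this.congr_deriv ?_
  simp [L1]
  generalize fa n y = A
  generalize fb n y = B
  linear_combination √((n:ℝ) + 1) * (n + 1) * (y * A ^ 2 - y * B ^ 2) * two_sq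

lemma L1_hd (n : ℕ) (y : ℝ) : HasDerivAt (L1 n) (L2 n y) y := by
  have := ((fa_hd n y).mul (fb_hd n y)).const_mul (-√2 * √((n:ℝ) + 1))
  refine this.congr_deriv ?_
  simp only [L2]
  generalize fa n y = A
  generalize fb n y = B
  linear_combination √((n:ℝ) + 1) * (n + 1) * (A ^ 2 - B ^ 2) * two_sq

lemma L2_hd (n : ℕ) (y : ℝ) : HasDerivAt (L2 n)
    (-((n + 1) ^ 2 * (4 * (2 - y ^ 2) * L1 n y + 4 * y * kerL (n + 1) y y))) y := by
  have := (((fa_hd n y).mul (fa_hd n y)).sub ((fb_hd n y).mul (fb_hd n y))).const_mul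
    (2 * ((n:ℝ) + 1) * √((n:ℝ) + 1))
  refine this.congr_deriv ?_
  rw [kerL_eq]
  simp only [L1]
  ring

lemma f_int (n : ℕ) : (Integrable fun y => fa n y * fa n y) ∧ (Integrable fun y => fb n y * fb n y)
    ∧ (Integrable fun y => fa n y * fb n y) := by
  have hs : 0 < √((n:ℝ)+1) := Real.sqrt_pos.2 (by positivity)
  refine ⟨?_, ?_, ?_⟩
  · simpa [fa, fb] using (osc_int (n+1) (n+1) 0).comp_mul_left' hs.ne'
  · simpa [fa, fb] using (osc_int n n 0).comp_mul_left' hs.ne'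
  · simpa [fa, fb] using (osc_int (n+1) n 0).comp_mul_left' hs.ne'

lemma L1_int (n : ℕ) : Integrable (L1 n) := (f_int n).2.2.const_mul _
lemma L2_int (n : ℕ) : Integrable (L2 n) := ((f_int n).1.sub (f_int n).2.1).const_mul _

lemma bulk (n : ℕ) (b : ℝ) (hb : 0 < 2 - b ^ 2) (hn : 2 ≤ (2 - b ^ 2) * ((n:ℝ) + 1)) (y : ℝ)
    (hy : |y| ≤ b) : kerL (n + 1) y y ≤ 32 / (2 - b ^ 2) ∧ |L1 n y| ≤ 32 / (2 - b ^ 2) := by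
  have hs : 0 < √((n:ℝ)+1) := Real.sqrt_pos.2 (by positivity)
  have hss := s_sq n
  have hy2 : y ^ 2 ≤ b ^ 2 := by rw [← sq_abs]; exact pow_le_pow_left₀ (abs_nonneg _) hy 2
  have hA := osc_bound (n + 1) (√((n:ℝ) + 1) * y)
  have hB := osc_bound n (√((n:ℝ) + 1) * y)
  rw [mul_pow, pow_two √_, hss] at hA hB
  change _ * fa n y ^ 2 ≤ _ at hA
  change _ * fb n y ^ 2 ≤ _ at hB
  push_cast at hA hB
  have hs2 : √((n:ℝ) + 1 + 1) ≤ 2 * √((n:ℝ) + 1) := by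
    apply Real.sqrt_le_iff.2
    constructor
    · positivity
    · nlinarith
  rw [kerL_eq, L1]
  generalize fa n y = A at *
  generalize fb n y = B at *
  generalize √((n:ℝ)+1) = s at *
  have hA' : s * A ^ 2 ≤ 8 / (2 - b ^ 2) := by
    rw [le_div_iff₀ hb]
    have h1 : (2 - b ^ 2) * (s * s) * A ^ 2 ≤ 8 * s := by
      rw [hss]
      have : (2 - b ^ 2) * (n + 1) * A ^ 2 ≤ (2 * (↑n + 1) + 1 - (↑n + 1) * y ^ 2) * A ^ 2 := by
        apply mul_le_mul_of_nonneg_right _ (sq_nonneg _)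
        nlinarith
      linarith
    have : s * (s * A ^ 2 * (2 - b ^ 2)) ≤ s * 8 := by linarith
    exact le_of_mul_le_mul_left this hs
  have hB' : s * B ^ 2 ≤ 8 / (2 - b ^ 2) := by
    rw [le_div_iff₀ hb]
    have h1 : (2 - b ^ 2) * (s * s) * B ^ 2 ≤ 8 * s := by
      rw [hss]
      have : (2 - b ^ 2) * (n + 1) * B ^ 2 ≤ 2 * ((2 * ↑n + 1 - (↑n + 1) * y ^ 2) * B ^ 2) := by
        rw [← mul_assoc]
        apply mul_le_mul_of_nonneg_right _ (sq_nonneg _)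
        nlinarith
      linarith
    have : s * (s * B ^ 2 * (2 - b ^ 2)) ≤ s * 8 := by linarith
    exact le_of_mul_le_mul_left this hs
  have hE : 32 / (2 - b ^ 2) = 4 * (8 / (2 - b ^ 2)) := by ring
  rw [hE]
  generalize 8 / (2 - b ^ 2) = Q at *
  have hyy : |√2 * y| ≤ 2 := by
    apply abs_le_of_sq_le_sq _ (by norm_num)
    rw [mul_pow, pow_two √2, two_sq]; nlinarith
  have hAB : |A * B| ≤ (A ^ 2 + B ^ 2) / 2 := by
    rw [abs_le]; constructor <;> nlinarith [sq_nonneg (A - B), sq_nonneg (A + B)]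
  have h2 : √2 ≤ (2:ℝ) := by
    apply Real.sqrt_le_iff.2; norm_num
  constructor
  · have h3 : |(√2 * y) * (A * B)| ≤ 2 * ((A ^ 2 + B ^ 2) / 2) := by
      rw [abs_mul]; exact mul_le_mul hyy hAB (abs_nonneg _) (by norm_num)
    have h4 := (abs_le.1 h3).1
    have : s * (A ^ 2 + B ^ 2 - √2 * y * A * B) ≤ s * (2 * (A ^ 2 + B ^ 2)) := by
      apply mul_le_mul_of_nonneg_left _ hs.le
      linarith
    linarith
  · rw [abs_mul, abs_mul, abs_neg, abs_of_pos hs, abs_of_nonneg (Real.sqrt_nonneg 2)]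
    have h5 : √2 * s * |A * B| ≤ 2 * s * ((A ^ 2 + B ^ 2) / 2) := by gcongr
    have := mul_nonneg hs.le (sq_nonneg A)
    have := mul_nonneg hs.le (sq_nonneg B)
    linarith

/-- Cauchy kernel `1/(t + iη - y)`. -/
noncomputable def kk (η t y : ℝ) : ℂ := ((t : ℂ) + η * Complex.I - y)⁻¹

lemma kk_im (η t y : ℝ) : ((t : ℂ) + η * Complex.I - y).im = η := by simp

lemma kk_ne (η t y : ℝ) (hη : 0 < η) : ((t : ℂ) + η * Complex.I - y) ≠ 0 := by
  intro h
  have := kk_im η t y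
  rw [h] at this
  simp at this
  exact hη.ne this

lemma kk_norm (η t y : ℝ) (hη : 0 < η) : ‖kk η t y‖ ≤ η⁻¹ := by
  unfold kk
  rw [norm_inv]
  apply inv_anti₀ hη
  have := Complex.abs_im_le_norm ((t : ℂ) + η * Complex.I - y)
  rw [kk_im, abs_of_pos hη] at this
  exact this

lemma kk_hd (η t y : ℝ) (hη : 0 < η) : HasDerivAt (fun y => kk η t y) (kk η t y ^ 2) y := by
  have h1 : HasDerivAt (fun y : ℝ => ((t : ℂ) + η * Complex.I - y)) (-1) y := by
    have := (Complex.ofRealCLM.hasDerivAt (x := y)).const_sub ((t : ℂ) + η * Complex.I)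
    simpa using this
  refine (h1.inv (kk_ne η t y hη)).congr_deriv ?_
  simp [kk]

lemma kk_hd' (η t y : ℝ) (hη : 0 < η) : HasDerivAt (fun t => kk η t y) (- kk η t y ^ 2) t := by
  have h1 : HasDerivAt (fun t : ℝ => ((t : ℂ) + η * Complex.I - y)) 1 t := by
    have := ((Complex.ofRealCLM.hasDerivAt (x := t)).add_const (η * Complex.I)).sub_const (y : ℂ)
    simpa using this
  refine (h1.inv (kk_ne η t y hη)).congr_deriv ?_
  simp [kk, neg_div]

lemma kk_cont (η t : ℝ) (hη : 0 < η) : Continuous (fun y => kk η t y) :=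
  continuous_iff_continuousAt.2 fun y => (kk_hd η t y hη).continuousAt

lemma kk_int (L : ℝ → ℝ) (hL : Integrable L) (η t : ℝ) (hη : 0 < η) (j : ℕ) :
    Integrable (fun y => (L y : ℂ) * kk η t y ^ j) := by
  refine (hL.ofReal (𝕜 := ℂ)).mul_bdd (c := (η⁻¹) ^ j) ?_ ?_
  · exact ((kk_cont η t hη).pow j).aestronglyMeasurable
  · refine Filter.Eventually.of_forall fun y => ?_
    rw [norm_pow]
    exact pow_le_pow_left₀ (norm_nonneg _) (kk_norm η t y hη) j

/-- Stieltjes transform -/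
noncomputable def GG (L : ℝ → ℝ) (η t : ℝ) : ℂ := ∫ y : ℝ, (L y : ℂ) * kk η t y

lemma GG_hd (L : ℝ → ℝ) (hL : Integrable L) (η t : ℝ) (hη : 0 < η) :
    HasDerivAt (GG L η) (- ∫ y : ℝ, (L y : ℂ) * kk η t y ^ 2) t := by
  have h := hasDerivAt_integral_of_dominated_loc_of_deriv_le (μ := volume)
    (F := fun t y => (L y : ℂ) * kk η t y) (F' := fun t y => (L y : ℂ) * (- kk η t y ^ 2))
    (x₀ := t) (s := univ) (bound := fun y => ‖L y‖ * (η⁻¹) ^ 2) Filter.univ_mem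
    (Filter.Eventually.of_forall fun t => by
      simpa using (kk_int L hL η t hη 1).aestronglyMeasurable)
    (by simpa using (kk_int L hL η t hη 1))
    (by simp only [mul_neg]; exact (kk_int L hL η t hη 2).neg.aestronglyMeasurable)
    (Filter.Eventually.of_forall fun y t _ => by
      rw [norm_mul, norm_neg, norm_pow, Complex.norm_real]
      exact mul_le_mul_of_nonneg_left (pow_le_pow_left₀ (norm_nonneg _) (kk_norm η t y hη) 2) (norm_nonneg _))
    (hL.norm.mul_const _)
    (Filter.Eventually.of_forall fun y t _ => (kk_hd' η t y hη).const_mul _)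
  refine h.2.congr_deriv ?_
  rw [← integral_neg]
  simp

lemma GG_ode (n : ℕ) (η t : ℝ) (hη : 0 < η) :
    4 * (2 - ((t : ℂ) + η * Complex.I) ^ 2) * (∫ y : ℝ, (kerL (n+1) y y : ℂ) * kk η t y ^ 2)
      - 4 * ((t : ℂ) + η * Complex.I) * GG (fun y => kerL (n + 1) y y) η t + 8
      + 6 / ((n : ℂ) + 1) ^ 2 * (∫ y : ℝ, (kerL (n+1) y y : ℂ) * kk η t y ^ 4) = 0 := by
  set L : ℝ → ℝ := fun y => kerL (n + 1) y y with hLdef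
  have hL : Integrable L := by simpa using kerL_int (n + 1) (by omega) 0
  have hL2 : Integrable (fun y => y ^ 2 * L y) := by simpa using kerL_int (n + 1) (by omega) 2
  have hn0 : ((n : ℂ) + 1) ≠ 0 := by exact_mod_cast Nat.succ_ne_zero n
  set z : ℂ := (t : ℂ) + η * Complex.I with hz
  let c : ℂ := 1 / ((n : ℂ) + 1) ^ 2
  let Φ : ℝ → ℂ := fun y => c * ((L2 n y : ℂ) * kk η t y - (L1 n y : ℂ) * kk η t y ^ 2
    + 2 * ((L y : ℂ) * kk η t y ^ 3)) + 4 * ((2 - (y : ℂ) ^ 2) * (L y : ℂ) * kk η t y)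
  let Φ' : ℝ → ℂ := fun y => 4 * (2 - z ^ 2) * ((L y : ℂ) * kk η t y ^ 2) - 4 * z * ((L y : ℂ) * kk η t y)
    + 8 * (L y : ℂ) + 6 * c * ((L y : ℂ) * kk η t y ^ 4)
  have hd : ∀ y, HasDerivAt Φ (Φ' y) y := by
    intro y
    have k1 := kk_hd η t y hη
    have k2 := k1.pow 2
    have k3 := k1.pow 3
    have l0 := (kerL_hd n y).ofReal_comp
    have l1 := (L1_hd n y).ofReal_comp
    have l2 := (L2_hd n y).ofReal_comp
    have hy := (((hasDerivAt_id' y).ofReal_comp).pow 2).const_sub (2 : ℂ)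
    have := ((((l2.mul k1).sub (l1.mul k2)).add ((l0.mul k3).const_mul 2)).const_mul c).add
      (((hy.mul l0).mul k1).const_mul 4)
    refine this.congr_deriv ?_
    have hk : (y : ℂ) * kk η t y = z * kk η t y - 1 := by
      have : (z - y) * kk η t y = 1 := mul_inv_cancel₀ (kk_ne η t y hη)
      linear_combination -this
    have hc : c * ((n : ℂ) + 1) ^ 2 = 1 := by simp only [c]; field_simp
    simp only [Φ', L, Pi.mul_apply, Pi.pow_apply]
    push_cast
    generalize kk η t y = k at *
    generalize kerL (n + 1) y y = l at *
    have hk2 : (y : ℂ) ^ 2 * k ^ 2 = (z * k - 1) ^ 2 := by rw [← hk]; ring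
    simp
    linear_combination (-(4 * (2 - (y:ℂ) ^ 2) * L1 n y + 4 * y * l) * k) * hc - 12 * l * hk
      - 4 * l * hk2
  have i1 : ∀ j, Integrable fun y => (L y : ℂ) * kk η t y ^ j := kk_int L hL η t hη
  have i1' : Integrable fun y => (L y : ℂ) * kk η t y := by simpa using i1 1
  have i2 : Integrable fun y => (L2 n y : ℂ) * kk η t y := by simpa using kk_int (L2 n) (L2_int n) η t hη 1
  have i3 : Integrable fun y => (L1 n y : ℂ) * kk η t y ^ 2 := kk_int (L1 n) (L1_int n) η t hη 2
  have i4 : Integrable fun y : ℝ => (2 - (y : ℂ) ^ 2) * (L y : ℂ) * kk η t y := by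
    have := kk_int (fun y => 2 * L y - y ^ 2 * L y) ((hL.const_mul 2).sub hL2) η t hη 1
    refine this.congr (Filter.Eventually.of_forall fun y => ?_)
    simp only [pow_one]; push_cast; ring
  have iL : Integrable fun y => (L y : ℂ) := hL.ofReal
  have hΦ : Integrable Φ :=
    (((i2.sub i3).add ((i1 3).const_mul 2)).const_mul c).add (i4.const_mul 4)
  have j1 := (i1 2).const_mul (4 * (2 - z ^ 2))
  have j2 := i1'.const_mul (4 * z)
  have j3 := iL.const_mul 8
  have j4 := (i1 4).const_mul (6 * c)
  have hΦ' : Integrable Φ' := ((j1.sub j2).add j3).add j4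
  have key := integral_eq_zero_of_hasDerivAt_of_integrable hd hΦ' hΦ
  have e : ∫ y, Φ' y = 4 * (2 - z ^ 2) * (∫ y : ℝ, (L y : ℂ) * kk η t y ^ 2)
      - 4 * z * (∫ y : ℝ, (L y : ℂ) * kk η t y) + 8 * (∫ y : ℝ, (L y : ℂ))
      + 6 * c * (∫ y : ℝ, (L y : ℂ) * kk η t y ^ 4) := by
    have e1 := integral_add ((j1.sub j2).add j3) j4
    have e2 := integral_add (j1.sub j2) j3
    have e3 := integral_sub j1 j2
    simp only [Pi.add_apply, Pi.sub_apply] at e1 e2 e3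
    simp only [Φ']
    rw [e1, e2, e3]
    simp only [integral_const_mul]
  have hone : ∫ y : ℝ, (L y : ℂ) = 1 := by
    rw [integral_complex_ofReal, kerL_integral (n + 1) (by omega)]; simp
  rw [e, hone] at key
  rw [← key]
  simp only [GG, c, L]
  ring

lemma kk_re (η t y : ℝ) : (kk η t y).re = (t - y) / ((t - y) ^ 2 + η ^ 2) := by
  unfold kk
  rw [Complex.inv_re, Complex.normSq_apply]
  simp
  congr 1
  ring

lemma kk_im' (η t y : ℝ) : (kk η t y).im = -η / ((t - y) ^ 2 + η ^ 2) := by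
  unfold kk
  rw [Complex.inv_im, Complex.normSq_apply]
  simp
  congr 1
  ring

lemma GG_int (L : ℝ → ℝ) (hL : Integrable L) (η t : ℝ) (hη : 0 < η) :
    Integrable (fun y => (L y : ℂ) * kk η t y) := by simpa using kk_int L hL η t hη 1

lemma GG_re (L : ℝ → ℝ) (hL : Integrable L) (η t : ℝ) (hη : 0 < η) :
    (Integrable fun y => L y * ((t - y) / ((t - y) ^ 2 + η ^ 2))) ∧
    (GG L η t).re = ∫ y, L y * ((t - y) / ((t - y) ^ 2 + η ^ 2)) := by
  have h := GG_int L hL η t hη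
  have e : ∀ y, RCLike.re ((L y : ℂ) * kk η t y) = L y * ((t - y) / ((t - y) ^ 2 + η ^ 2)) := by
    intro y; rw [← kk_re]; simp
  have h2 := integral_re h
  have h3 := h.re
  simp_rw [e] at h2 h3
  exact ⟨h3, h2.symm⟩

lemma GG_im (L : ℝ → ℝ) (hL : Integrable L) (η t : ℝ) (hη : 0 < η) :
    (GG L η t).im = ∫ y, L y * (-η / ((t - y) ^ 2 + η ^ 2)) := by
  have h := GG_int L hL η t hη
  have e : ∀ y, RCLike.im ((L y : ℂ) * kk η t y) = L y * (-η / ((t - y) ^ 2 + η ^ 2)) := by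
    intro y; rw [← kk_im']; simp
  have h2 := integral_im h
  simp_rw [e] at h2
  exact h2.symm

/-- cutoff -/
noncomputable def chi (δ u : ℝ) : ℝ := (Ioo (-δ) δ).indicator (fun _ => (1:ℝ)) u

lemma chi_int (δ : ℝ) : Integrable (chi δ) := by
  unfold chi
  exact (integrable_indicator_iff measurableSet_Ioo).2 (integrableOn_const (by simp) (by simp))

lemma chi_integral (δ : ℝ) (hδ : 0 ≤ δ) : ∫ u, chi δ u = 2 * δ := by
  unfold chi
  rw [integral_indicator measurableSet_Ioo]
  simp [Measure.real]
  rw [ENNReal.toReal_ofReal (by linarith)]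
  ring

lemma chi_one (δ u : ℝ) (h : |u| < δ) : chi δ u = 1 := by
  unfold chi; rw [indicator_of_mem]; exact abs_lt.1 h

lemma chi_zero (δ u : ℝ) (h : δ ≤ |u|) : chi δ u = 0 := by
  unfold chi; rw [indicator_of_notMem]
  intro h2; exact absurd (abs_lt.2 h2) (not_lt.2 h)

lemma chi_neg (δ u : ℝ) : chi δ (-u) = chi δ u := by
  by_cases h : |u| < δ
  · rw [chi_one _ _ h, chi_one]; rwa [abs_neg]
  · rw [chi_zero _ _ (not_lt.1 h), chi_zero]; rw [abs_neg]; exact not_lt.1 h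

/-- difference of the two kernels -/
noncomputable def qq (η ρ u : ℝ) : ℝ :=
  u / (u ^ 2 + η ^ 2) - {u : ℝ | ρ ≤ |u|}.indicator (fun u => 1 / u) u

lemma set_meas (ρ : ℝ) : MeasurableSet {u : ℝ | ρ ≤ |u|} :=
  measurableSet_le measurable_const continuous_abs.measurable

lemma qq_meas (η ρ : ℝ) : Measurable (qq η ρ) := by
  unfold qq
  apply Measurable.sub
  · fun_prop
  · exact Measurable.indicator (by fun_prop) (set_meas ρ)

lemma qq_neg (η ρ u : ℝ) : qq η ρ (-u) = - qq η ρ u := by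
  unfold qq
  by_cases h : ρ ≤ |u|
  · rw [indicator_of_mem (by simpa using h), indicator_of_mem (by simpa using h)]
    rw [neg_sq, div_neg, neg_div]; ring
  · rw [indicator_of_notMem (by simpa using h), indicator_of_notMem (by simpa using h)]
    rw [neg_sq, neg_div]; ring

lemma qq_near (η ρ u : ℝ) (hη : 0 < η) (hρ : 0 < ρ) : |u| * |qq η ρ u| ≤ 1 := by
  rw [← abs_mul]
  have hp : 0 < u ^ 2 + η ^ 2 := by positivity
  have h1 : 0 ≤ u ^ 2 / (u ^ 2 + η ^ 2) := by positivity
  have h2 : u ^ 2 / (u ^ 2 + η ^ 2) ≤ 1 := by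
    rw [div_le_one hp]; nlinarith
  have e1 : u * (u / (u ^ 2 + η ^ 2)) = u ^ 2 / (u ^ 2 + η ^ 2) := by ring
  unfold qq
  rw [mul_sub, e1]
  by_cases h : ρ ≤ |u|
  · rw [indicator_of_mem (by simpa using h)]
    have : u ≠ 0 := by rintro rfl; simp at h; linarith
    rw [mul_one_div_cancel this, abs_le]
    constructor <;> linarith
  · rw [indicator_of_notMem (by simpa using h), abs_le]
    constructor <;> linarith

lemma qq_far (η ρ δ u : ℝ) (hη : 0 < η) (hρ : 0 < ρ) (hρδ : ρ ≤ δ) (hu : δ ≤ |u|) :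
    |qq η ρ u| ≤ η ^ 2 / δ ^ 3 := by
  unfold qq
  have hδ : 0 < δ := by linarith
  have hu0 : 0 < |u| := by linarith
  have hu' : u ≠ 0 := abs_pos.1 hu0
  rw [indicator_of_mem (show u ∈ {u : ℝ | ρ ≤ |u|} from hρδ.trans hu)]
  have hp : 0 < u ^ 2 + η ^ 2 := by positivity
  have e : u / (u ^ 2 + η ^ 2) - 1 / u = - (η ^ 2 / (u * (u ^ 2 + η ^ 2))) := by
    field_simp; ring
  rw [e, abs_neg, abs_div, abs_mul, abs_of_pos hp, abs_of_pos (by positivity : 0 < η ^ 2)]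
  apply div_le_div_of_nonneg_left (by positivity) (by positivity)
  have h2 : δ ^ 2 ≤ u ^ 2 + η ^ 2 := by
    have := pow_le_pow_left₀ hδ.le hu 2
    rw [sq_abs] at this
    nlinarith
  calc δ ^ 3 = δ * δ ^ 2 := by ring
    _ ≤ _ := mul_le_mul hu h2 (by positivity) (by positivity)

lemma qq_bdd (η ρ u : ℝ) (hη : 0 < η) (hρ : 0 < ρ) : |qq η ρ u| ≤ 1 / ρ + ρ / η ^ 2 := by
  by_cases h : ρ ≤ |u|
  · have h1 := qq_near η ρ u hη hρ
    have hu : 0 < |u| := by linarith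
    have : |qq η ρ u| ≤ 1 / |u| := by rw [le_div_iff₀ hu]; linarith
    have h3 : 1 / |u| ≤ 1 / ρ := one_div_le_one_div_of_le hρ h
    have : 0 ≤ ρ / η ^ 2 := by positivity
    linarith
  · unfold qq
    rw [indicator_of_notMem (by simpa using h), sub_zero, abs_div,
      abs_of_pos (by positivity : 0 < u ^ 2 + η ^ 2)]
    push Not at h
    have : |u| / (u ^ 2 + η ^ 2) ≤ ρ / η ^ 2 := by
      apply div_le_div₀ hρ.le h.le (by positivity)
      nlinarith
    have : 0 ≤ 1 / ρ := by positivity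
    linarith

lemma compare (L : ℝ → ℝ) (hL : Integrable L) (h0 : ∀ y, 0 ≤ L y) (h1 : ∫ y, L y = 1)
    (x δ ρ η Λ : ℝ) (hρ : 0 < ρ) (hρδ : ρ ≤ δ) (hη : 0 < η) (hΛ : 0 ≤ Λ)
    (hlip : ∀ y, |x - y| < δ → |L y - L x| ≤ Λ * |x - y|) :
    |(∫ y in {y | ρ ≤ |x - y|}, L y / (x - y)) - (GG L η x).re| ≤ 2 * Λ * δ + η ^ 2 / δ ^ 3 := by
  have hδ : 0 < δ := by linarith
  obtain ⟨iG, eG⟩ := GG_re L hL η x hη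
  have hm : MeasurableSet {y : ℝ | ρ ≤ |x - y|} :=
    measurableSet_le measurable_const (by fun_prop)
  have mq : Measurable fun y => qq η ρ (x - y) := (qq_meas η ρ).comp (by fun_prop)
  have iq : Integrable fun y => L y * qq η ρ (x - y) := by
    refine hL.mul_bdd (c := 1 / ρ + ρ / η ^ 2) mq.aestronglyMeasurable ?_
    exact Filter.Eventually.of_forall fun y => qq_bdd η ρ _ hη hρ
  have ic0 : Integrable fun u => chi δ u * qq η ρ u := by
    refine (chi_int δ).mul_bdd (c := 1 / ρ + ρ / η ^ 2) (qq_meas η ρ).aestronglyMeasurable ?_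
    exact Filter.Eventually.of_forall fun y => qq_bdd η ρ _ hη hρ
  have ic : Integrable fun y => chi δ (x - y) * qq η ρ (x - y) := ic0.comp_sub_left x
  have eT : (∫ y in {y | ρ ≤ |x - y|}, L y / (x - y)) =
      (GG L η x).re - ∫ y, L y * qq η ρ (x - y) := by
    rw [eG, ← integral_sub iG iq, ← integral_indicator hm]
    congr 1
    funext y
    unfold qq
    by_cases h : ρ ≤ |x - y|
    · rw [indicator_of_mem (show y ∈ {y | ρ ≤ |x - y|} from h),
        indicator_of_mem (show x - y ∈ {u : ℝ | ρ ≤ |u|} from h)]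
      ring
    · rw [indicator_of_notMem (show ¬ y ∈ {y | ρ ≤ |x - y|} from h),
        indicator_of_notMem (show ¬ x - y ∈ {u : ℝ | ρ ≤ |u|} from h)]
      ring
  have ez : ∫ y, chi δ (x - y) * qq η ρ (x - y) = 0 := by
    rw [integral_sub_left_eq_self (fun u => chi δ u * qq η ρ u) volume x]
    have h2 := integral_neg_eq_self (fun u => chi δ u * qq η ρ u) volume
    simp only [chi_neg, qq_neg, mul_neg, integral_neg] at h2
    linarith
  have e3 : ∫ y, L y * qq η ρ (x - y) =
      ∫ y, (L y - L x * chi δ (x - y)) * qq η ρ (x - y) := by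
    have : ∫ y, (L y * qq η ρ (x - y) - L x * (chi δ (x - y) * qq η ρ (x - y))) =
        ∫ y, L y * qq η ρ (x - y) := by
      rw [integral_sub iq (ic.const_mul _), integral_const_mul, ez]; ring
    rw [← this]
    congr 1
    funext y
    ring
  rw [eT, e3]
  have hb : Integrable fun y => Λ * chi δ (x - y) + η ^ 2 / δ ^ 3 * L y :=
    (((chi_int δ).comp_sub_left x).const_mul Λ).add (hL.const_mul _)
  have key := norm_integral_le_of_norm_le (f := fun y => (L y - L x * chi δ (x - y)) * qq η ρ (x - y)) hb
    (Filter.Eventually.of_forall fun y => by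
      rw [Real.norm_eq_abs, abs_mul]
      by_cases h : |x - y| < δ
      · rw [chi_one _ _ h, mul_one, mul_one]
        have a1 := hlip y h
        have a2 := qq_near η ρ (x - y) hη hρ
        have a3 := mul_le_mul_of_nonneg_right a1 (abs_nonneg (qq η ρ (x - y)))
        have a4 := mul_le_mul_of_nonneg_left a2 hΛ
        have a5 : 0 ≤ η ^ 2 / δ ^ 3 * L y := mul_nonneg (by positivity) (h0 y)
        linarith
      · push Not at h
        rw [chi_zero _ _ h, mul_zero, mul_zero, sub_zero, zero_add, abs_of_nonneg (h0 y), mul_comm]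
        exact mul_le_mul_of_nonneg_right (qq_far η ρ δ _ hη hρ hρδ h) (h0 y))
  rw [integral_add (((chi_int δ).comp_sub_left x).const_mul Λ) (hL.const_mul _), integral_const_mul,
    integral_const_mul, integral_sub_left_eq_self (chi δ) volume x, chi_integral δ hδ.le, h1,
    Real.norm_eq_abs] at key
  rw [sub_sub_cancel_left, abs_neg]
  linarith

lemma GG_zero_re (L : ℝ → ℝ) (hL : Integrable L) (he : ∀ y, L (-y) = L y) (η : ℝ) (hη : 0 < η) :
    (GG L η 0).re = 0 := by
  rw [(GG_re L hL η 0 hη).2]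
  have h2 := integral_neg_eq_self (fun y => L y * ((0 - y) / ((0 - y) ^ 2 + η ^ 2))) volume
  have e : ∀ y : ℝ, L (-y) * ((0 - -y) / ((0 - -y) ^ 2 + η ^ 2)) =
      -(L y * ((0 - y) / ((0 - y) ^ 2 + η ^ 2))) := by
    intro y
    rw [he, show (0 - -y) = y by ring, show (0 - y) = -y by ring, neg_sq, neg_div]; ring
  simp_rw [e] at h2
  rw [integral_neg] at h2
  linarith

lemma GG_zero_im (L : ℝ → ℝ) (hL : Integrable L) (h0 : ∀ y, 0 ≤ L y) (h1 : ∫ y, L y = 1)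
    (η κ B : ℝ) (hη : 0 < η) (hκ : 0 < κ) (hB : ∀ y, |y| ≤ κ → L y ≤ B) :
    η * |(GG L η 0).im| ≤ 2 * B * κ + η ^ 2 / κ ^ 2 := by
  have hB0 : 0 ≤ B := (h0 0).trans (hB 0 (by simpa using hκ.le))
  have hb : Integrable fun y => B * chi κ y + η ^ 2 / κ ^ 2 * L y :=
    ((chi_int κ).const_mul B).add (hL.const_mul _)
  have key := norm_integral_le_of_norm_le (f := fun y => η * (L y * (-η / ((0 - y) ^ 2 + η ^ 2)))) hb
    (Filter.Eventually.of_forall fun y => by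
      have hp : 0 < y ^ 2 + η ^ 2 := by positivity
      have e : η * (L y * (-η / ((0 - y) ^ 2 + η ^ 2))) = - (L y * (η ^ 2 / (y ^ 2 + η ^ 2))) := by
        rw [zero_sub, neg_sq]; ring
      rw [e, norm_neg, Real.norm_eq_abs, abs_of_nonneg (mul_nonneg (h0 y) (by positivity))]
      by_cases h : |y| < κ
      · rw [chi_one _ _ h]
        have a1 : η ^ 2 / (y ^ 2 + η ^ 2) ≤ 1 := by rw [div_le_one hp]; nlinarith
        have a2 := mul_le_mul_of_nonneg_left a1 (h0 y)
        have a3 := hB y h.le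
        have a5 : 0 ≤ η ^ 2 / κ ^ 2 * L y := mul_nonneg (by positivity) (h0 y)
        linarith
      · push Not at h
        rw [chi_zero _ _ h, mul_zero, zero_add, mul_comm]
        apply mul_le_mul_of_nonneg_right _ (h0 y)
        apply div_le_div_of_nonneg_left (by positivity) (by positivity)
        have := pow_le_pow_left₀ hκ.le h 2
        rw [sq_abs] at this
        nlinarith)
  rw [integral_add ((chi_int κ).const_mul B) (hL.const_mul _), integral_const_mul, integral_const_mul,
    integral_const_mul, ← GG_im L hL η 0 hη, chi_integral κ hκ.le, h1, Real.norm_eq_abs, abs_mul,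
    abs_of_pos hη] at key
  linarith

/-- square root of `2 - z^2` -/
noncomputable def ss (η t : ℝ) : ℂ := (2 - ((t : ℂ) + η * Complex.I) ^ 2) ^ ((1 : ℂ) / 2)

lemma ss_sq (η t : ℝ) : ss η t ^ 2 = 2 - ((t : ℂ) + η * Complex.I) ^ 2 := by
  unfold ss
  have := Complex.cpow_nat_inv_pow (2 - ((t : ℂ) + η * Complex.I) ^ 2) (n := 2) (by norm_num)
  rw [one_div]
  exact_mod_cast this

lemma base_re (η t : ℝ) : (2 - ((t : ℂ) + η * Complex.I) ^ 2).re = 2 - t ^ 2 + η ^ 2 := by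
  simp [pow_two]; ring

lemma base_im (η t : ℝ) : (2 - ((t : ℂ) + η * Complex.I) ^ 2).im = -(2 * t * η) := by
  simp [pow_two]; ring

lemma ss_re_im (η t : ℝ) : (ss η t).re ^ 2 - (ss η t).im ^ 2 = 2 - t ^ 2 + η ^ 2 ∧
    (ss η t).re * (ss η t).im = - (t * η) := by
  have h := ss_sq η t
  have h1 := congrArg Complex.re h
  have h2 := congrArg Complex.im h
  rw [base_re] at h1
  rw [base_im] at h2
  simp [pow_two] at h1 h2
  constructor
  · nlinarith
  · nlinarith

lemma ss_hd (η t : ℝ) (ht : 0 < 2 - t ^ 2) : ss η t ≠ 0 ∧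
    HasDerivAt (ss η) (-((t : ℂ) + η * Complex.I) / ss η t) t := by
  have hre : 0 < (2 - ((t : ℂ) + η * Complex.I) ^ 2).re := by
    rw [base_re]; positivity
  have hb0 : 2 - ((t : ℂ) + η * Complex.I) ^ 2 ≠ 0 := by
    intro h; rw [h] at hre; simp at hre
  have hs0 : ss η t ≠ 0 := by
    intro h
    have := ss_sq η t
    rw [h] at this
    apply hb0
    rw [← this]; simp
  refine ⟨hs0, ?_⟩
  have h1 : HasDerivAt (fun ζ : ℂ => 2 - (ζ + η * Complex.I) ^ 2) (-(2 * ((t:ℂ) + η * Complex.I))) (t : ℂ) := by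
    have := (((hasDerivAt_id' (t : ℂ)).add_const (η * Complex.I)).pow 2).const_sub 2
    simpa using this
  have h2 := (h1.cpow_const (c := 1 / 2) (Or.inl hre)).comp_ofReal
  refine h2.congr_deriv ?_
  rw [Complex.cpow_sub _ _ hb0, Complex.cpow_one]
  change 1 / 2 * (ss η t / _) * _ = _
  rw [← ss_sq]
  field_simp

lemma stieltjes (n : ℕ) (η b x : ℝ) (hη : 0 < η) (hη1 : η ≤ 1) (hb0 : 0 ≤ b) (hb : 0 < 2 - b ^ 2)
    (hx : |x| ≤ b) :
    |(GG (fun y => kerL (n + 1) y y) η x).re - x| ≤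
      2 / √(2 - b ^ 2) * (η * |(GG (fun y => kerL (n + 1) y y) η 0).im| + η ^ 2)
        + 9 / (((n : ℝ) + 1) ^ 2 * η ^ 4 * √(2 - b ^ 2) ^ 3) := by
  set L : ℝ → ℝ := fun y => kerL (n + 1) y y with hLdef
  have hL : Integrable L := by simpa using kerL_int (n + 1) (by omega) 0
  have h0 : ∀ y, 0 ≤ L y := fun y => kerL_nonneg _ y
  have h1 : ∫ y, L y = 1 := kerL_integral (n + 1) (by omega)
  set c := √(2 - b ^ 2) with hc
  have hcp : 0 < c := Real.sqrt_pos.2 hb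
  have hc2 : c ^ 2 = 2 - b ^ 2 := Real.sq_sqrt hb.le
  have hb2 : b ≤ 2 := by nlinarith
  have tb : ∀ t, |t| ≤ b → t ^ 2 ≤ b ^ 2 := by
    intro t ht
    rw [← sq_abs]; exact pow_le_pow_left₀ (abs_nonneg _) ht 2
  let w : ℝ → ℂ := fun t => GG L η t - ((t : ℂ) + η * Complex.I)
  let J : ℝ → ℂ := fun t => ∫ y : ℝ, (L y : ℂ) * kk η t y ^ 4
  have hJ : ∀ t, ‖J t‖ ≤ (η⁻¹) ^ 4 := by
    intro t
    have := norm_integral_le_of_norm_le (f := fun y => (L y : ℂ) * kk η t y ^ 4)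
      (hL.mul_const ((η⁻¹) ^ 4)) (Filter.Eventually.of_forall fun y => by
        rw [norm_mul, norm_pow, Complex.norm_real, Real.norm_eq_abs, abs_of_nonneg (h0 y)]
        exact mul_le_mul_of_nonneg_left (pow_le_pow_left₀ (norm_nonneg _) (kk_norm η t y hη) 4) (h0 y))
    rw [integral_mul_const, h1, one_mul] at this
    exact this
  have hN : (0:ℝ) < (n:ℝ) + 1 := by positivity
  have sre : ∀ t, |t| ≤ b → c ≤ |(ss η t).re| := by
    intro t ht
    have := (ss_re_im η t).1
    have h2 := tb t ht
    apply abs_le_of_sq_le_sq' _ (abs_nonneg _) |>.2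
    rw [sq_abs, hc2]
    nlinarith [sq_nonneg (ss η t).im]
  have snorm : ∀ t, |t| ≤ b → c ≤ ‖ss η t‖ := fun t ht =>
    (sre t ht).trans (Complex.abs_re_le_norm _)
  have hd : ∀ t, |t| ≤ b → HasDerivAt (fun t => w t / ss η t)
      (3 / (2 * ((n:ℂ) + 1) ^ 2) * J t / ss η t ^ 3) t := by
    intro t ht
    obtain ⟨s0, sd⟩ := ss_hd η t (by have := tb t ht; linarith)
    have hz : HasDerivAt (fun t : ℝ => (t : ℂ) + η * Complex.I) 1 t := by
      have := (Complex.ofRealCLM.hasDerivAt (x := t)).add_const (η * Complex.I)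
      simpa using this
    have wd := (GG_hd L hL η t hη).sub hz
    refine (wd.div sd s0).congr_deriv ?_
    have ode := GG_ode n η t hη
    have sq' := ss_sq η t
    have hn0 : ((n : ℂ) + 1) ≠ 0 := by exact_mod_cast Nat.succ_ne_zero n
    change (_ * _ - (GG L η t - ((t : ℂ) + η * Complex.I)) * _) / _ = _
    change 4 * _ * (∫ y : ℝ, (L y : ℂ) * kk η t y ^ 2) - 4 * _ * GG L η t + 8 + _ * J t = 0 at ode
    rw [← sq'] at ode
    generalize (∫ y : ℝ, (L y : ℂ) * kk η t y ^ 2) = I2 at *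
    generalize (t : ℂ) + η * Complex.I = z at *
    generalize ss η t = s at *
    generalize GG L η t = G at *
    generalize J t = j at *
    have e : 3 / (2 * ((n:ℂ) + 1) ^ 2) * j = (6 / ((n:ℂ) + 1) ^ 2 * j) / 4 := by
      field_simp; ring
    rw [e]
    have e2 : 6 / ((n:ℂ) + 1) ^ 2 * j = - (4 * s ^ 2 * I2 - 4 * z * G + 8) := by
      linear_combination ode
    rw [e2, eq_div_iff (pow_ne_zero 3 s0)]
    field_simp
    linear_combination (-4 : ℂ) * sq'
  have hbd : ∀ t, |t| ≤ b → ‖3 / (2 * ((n:ℂ) + 1) ^ 2) * J t / ss η t ^ 3‖ ≤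
      3 / (2 * ((n:ℝ) + 1) ^ 2) * (η⁻¹) ^ 4 / c ^ 3 := by
    intro t ht
    rw [norm_div, norm_mul, norm_pow]
    have e : ‖(3 / (2 * ((n:ℂ) + 1) ^ 2) : ℂ)‖ = 3 / (2 * ((n:ℝ) + 1) ^ 2) := by
      have : (3 / (2 * ((n:ℂ) + 1) ^ 2) : ℂ) = ((3 / (2 * ((n:ℝ) + 1) ^ 2) : ℝ) : ℂ) := by push_cast; rfl
      rw [this, Complex.norm_real, Real.norm_eq_abs, abs_of_nonneg (by positivity)]
    rw [e]
    apply div_le_div₀ (by positivity) _ (by positivity) (pow_le_pow_left₀ hcp.le (snorm t ht) 3)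
    exact mul_le_mul_of_nonneg_left (hJ t) (by positivity)
  have mv := Convex.norm_image_sub_le_of_norm_hasDerivWithin_le (𝕜 := ℝ) (s := Icc (-b) b) (x := 0) (y := x)
    (f := fun t => w t / ss η t)
    (fun t ht => (hd t (abs_le.2 ht)).hasDerivWithinAt) (fun t ht => hbd t (abs_le.2 ht))
    (convex_Icc _ _) ⟨by linarith, hb0⟩ (abs_le.1 hx)
  rw [sub_zero, Real.norm_eq_abs] at mv
  have sx0 := (ss_hd η x (by have := tb x hx; linarith)).1
  have s00 := (ss_hd η 0 (by norm_num)).1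
  have ex : w x = ss η x * (w 0 / ss η 0) + ss η x * (w x / ss η x - w 0 / ss η 0) := by
    field_simp; ring
  have snx : ‖ss η x‖ ≤ 3 := by
    have : ‖ss η x‖ ^ 2 ≤ 3 ^ 2 := by
      rw [← norm_pow, ss_sq]
      refine (norm_sub_le _ _).trans ?_
      rw [norm_pow]
      have hz : ‖(x : ℂ) + η * Complex.I‖ ^ 2 = x ^ 2 + η ^ 2 := by
        rw [← Complex.normSq_eq_norm_sq, Complex.normSq_add_mul_I]
      rw [hz]
      have := tb x hx
      simp
      nlinarith
    exact (pow_le_pow_iff_left₀ (norm_nonneg _) (by norm_num) (by norm_num)).1 this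
  -- second term
  have t2 : ‖ss η x * (w x / ss η x - w 0 / ss η 0)‖ ≤ 9 / (((n : ℝ) + 1) ^ 2 * η ^ 4 * c ^ 3) := by
    rw [norm_mul]
    have hx2 : |x| ≤ 2 := hx.trans hb2
    calc _ ≤ 3 * (3 / (2 * ((n:ℝ) + 1) ^ 2) * (η⁻¹) ^ 4 / c ^ 3 * 2) := by
          apply mul_le_mul snx _ (norm_nonneg _) (by norm_num)
          refine mv.trans ?_
          apply mul_le_mul_of_nonneg_left hx2 (by positivity)
      _ = _ := by field_simp; norm_num
  -- first term
  have w0re : (w 0).re = 0 := by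
    have := GG_zero_re L hL (fun y => kerL_even (n + 1) y) η hη
    simp [w, this]
  have w0im : |(w 0).im| ≤ |(GG L η 0).im| + η := by
    have : (w 0).im = (GG L η 0).im - η := by simp [w]
    rw [this]
    refine (abs_sub _ _).trans ?_
    rw [abs_of_pos hη]
  have s0im : (ss η 0).im = 0 := by
    have := (ss_re_im η 0).2
    have h2 := sre 0 (by simpa using hb0)
    rw [zero_mul, neg_zero, mul_eq_zero] at this
    rcases this with h | h
    · rw [h] at h2; simp at h2; linarith
    · exact h
  have s0re : 1 ≤ |(ss η 0).re| := by
    have := (ss_re_im η 0).1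
    rw [s0im] at this
    apply abs_le_of_sq_le_sq' _ (abs_nonneg _) |>.2
    rw [sq_abs]
    nlinarith
  have sxim : |(ss η x).im| ≤ 2 * η / c := by
    rw [le_div_iff₀ hcp]
    have h2 := congrArg abs (ss_re_im η x).2
    rw [abs_mul, abs_neg, abs_mul, abs_of_pos hη] at h2
    have h3 := mul_le_mul_of_nonneg_left (sre x hx) (abs_nonneg (ss η x).im)
    have h4 := mul_le_mul_of_nonneg_right (hx.trans hb2) hη.le
    linarith
  have t1 : |(ss η x * (w 0 / ss η 0)).re| ≤ 2 / c * (η * |(GG L η 0).im| + η ^ 2) := by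
    have e0 : ss η 0 = ((ss η 0).re : ℂ) := by
      apply Complex.ext <;> simp [s0im]
    have e1 : (ss η x * (w 0 / ss η 0)).re = - ((ss η x).im * ((w 0).im / (ss η 0).re)) := by
      rw [e0, Complex.mul_re, Complex.div_ofReal_re, Complex.div_ofReal_im, w0re]
      simp
    rw [e1, abs_neg, abs_mul, abs_div]
    have h3 : |(w 0).im| / |(ss η 0).re| ≤ |(GG L η 0).im| + η := by
      refine (div_le_self (abs_nonneg _) s0re).trans w0im
    calc _ ≤ 2 * η / c * (|(GG L η 0).im| + η) :=
          mul_le_mul sxim h3 (by positivity) (by positivity)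
      _ = _ := by ring
  have efin : (GG L η x).re - x = (w x).re := by simp [w]
  rw [efin, ex, Complex.add_re]
  refine (abs_add_le _ _).trans (add_le_add t1 ((Complex.abs_re_le_norm _).trans t2))

lemma lip (n : ℕ) (b : ℝ) (hb : 0 < 2 - b ^ 2) (hn : 2 ≤ (2 - b ^ 2) * ((n:ℝ) + 1)) (x y : ℝ)
    (hx : |x| ≤ b) (hy : |y| ≤ b) :
    |kerL (n + 1) y y - kerL (n + 1) x x| ≤ 32 / (2 - b ^ 2) * |x - y| := by
  have mv := Convex.norm_image_sub_le_of_norm_hasDerivWithin_le (𝕜 := ℝ) (s := Icc (-b) b) (x := x) (y := y)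
    (f := fun t => kerL (n + 1) t t)
    (fun t _ => (kerL_hd n t).hasDerivWithinAt) (fun t ht => (bulk n b hb hn t (abs_le.2 ht)).2)
    (convex_Icc _ _) (abs_le.1 hx) (abs_le.1 hy)
  rw [abs_sub_comm x y]
  exact mv

end DriftAux

/-- Drift cancellation estimate (Lemma 4.4):
`lim_{r→∞} limsup_{N→∞} sup_{|x|<R} | ∫_{T^N_{r,∞}(x)} L^N(y,y)/(x_θ^N - y) dy - θ | = 0`. -/
theorem drift_cancellation (θ : ℝ) (hθ1 : -Real.sqrt 2 < θ) (hθ2 : θ < Real.sqrt 2)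
    (R : ℕ) (hR : 1 ≤ R) :
    ∀ ε : ℝ, 0 < ε → ∃ r0 : ℝ, ∀ r : ℝ, r0 ≤ r → ∃ N0 : ℕ, ∀ N : ℕ, N0 ≤ N →
      ∀ x : ℝ, |x| < (R : ℝ) →
      |(∫ y in {y : ℝ | r / (N : ℝ) ≤ |x / (N : ℝ) + θ - y|},
          kerL N y y / (x / (N : ℝ) + θ - y)) - θ| < ε := by
  intro ε hε
  have hθ : |θ| < √2 := abs_lt.2 ⟨hθ1, hθ2⟩
  have h22 : √2 * √2 = (2:ℝ) := DriftAux.two_sq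
  obtain ⟨b, hbdef⟩ : ∃ b, b = (|θ| + √2) / 2 := ⟨_, rfl⟩
  obtain ⟨m, hmdef⟩ : ∃ m, m = (√2 - |θ|) / 2 := ⟨_, rfl⟩
  have hm : 0 < m := by linarith
  have hbm : |θ| + m = b := by linarith
  have hs2 : 0 < √2 := by positivity
  have hb0 : 0 < b := by have := abs_nonneg θ; linarith
  have hb : 0 < 2 - b ^ 2 := by
    have : b < √2 := by linarith
    nlinarith
  obtain ⟨B, hB⟩ : ∃ B, B = 32 / (2 - b ^ 2) := ⟨_, rfl⟩
  have hBp : 0 < B := by rw [hB]; positivity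
  obtain ⟨c, hc⟩ : ∃ c, c = √(2 - b ^ 2) := ⟨_, rfl⟩
  have hcp : 0 < c := by rw [hc]; exact Real.sqrt_pos.2 hb
  obtain ⟨δ, hδ, hδm, hδB⟩ : ∃ δ : ℝ, 0 < δ ∧ δ ≤ m / 2 ∧ 2 * B * δ ≤ ε / 8 := by
    refine ⟨min (m / 2) (ε / (16 * B)), by positivity, min_le_left _ _, ?_⟩
    have := min_le_right (m / 2) (ε / (16 * B))
    rw [le_div_iff₀ (by positivity)] at this
    linarith
  obtain ⟨κ, hκ, hκb, hκε⟩ : ∃ κ : ℝ, 0 < κ ∧ κ ≤ b ∧ 2 / c * (2 * B * κ) ≤ ε / 8 := by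
    refine ⟨min b (ε * c / (32 * B)), by positivity, min_le_left _ _, ?_⟩
    have := min_le_right b (ε * c / (32 * B))
    rw [le_div_iff₀ (by positivity)] at this
    rw [div_mul_eq_mul_div, div_le_iff₀ hcp]
    linarith
  obtain ⟨C1, hC1⟩ : ∃ C1, C1 = 1 / δ ^ 3 + 2 / c * (1 / κ ^ 2 + 1) := ⟨_, rfl⟩
  have hC1p : 0 < C1 := by rw [hC1]; positivity
  obtain ⟨η, hη, hη1, hηε⟩ : ∃ η : ℝ, 0 < η ∧ η ≤ 1 ∧ η ^ 2 * C1 ≤ ε / 16 := by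
    refine ⟨min 1 (ε / (16 * C1)), by positivity, min_le_left _ _, ?_⟩
    have h1 := min_le_left 1 (ε / (16 * C1))
    have h2 := min_le_right 1 (ε / (16 * C1))
    have h3 : 0 < min 1 (ε / (16 * C1)) := by positivity
    rw [le_div_iff₀ (by positivity)] at h2
    generalize min 1 (ε / (16 * C1)) = η at *
    have : η ^ 2 ≤ η := by nlinarith
    have := mul_le_mul_of_nonneg_right this hC1p.le
    linarith
  refine ⟨1, fun r hr => ?_⟩
  have hr0 : 0 < r := by linarith
  obtain ⟨N0, hN0⟩ := exists_nat_ge (1 + r / δ + R / (m / 2) + R / (ε / 8) + 2 / (2 - b ^ 2)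
    + 9 / (η ^ 4 * c ^ 3) / (ε / 8))
  refine ⟨N0, fun N hN x hx => ?_⟩
  have hNN : (N0 : ℝ) ≤ N := by exact_mod_cast hN
  have a1 : 0 ≤ r / δ := by positivity
  have a2 : 0 ≤ (R:ℝ) / (m / 2) := by positivity
  have a3 : 0 ≤ (R:ℝ) / (ε / 8) := by positivity
  have a4 : 0 ≤ 2 / (2 - b ^ 2) := by positivity
  have a5 : 0 ≤ 9 / (η ^ 4 * c ^ 3) / (ε / 8) := by positivity
  have hN1 : (1:ℝ) ≤ N := by linarith
  have hNp : (0:ℝ) < N := by linarith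
  have b1 : r / N ≤ δ := by
    rw [div_le_iff₀ hNp, mul_comm, ← div_le_iff₀ hδ]; linarith
  have b2 : (R:ℝ) / N ≤ m / 2 := by
    rw [div_le_iff₀ hNp, mul_comm, ← div_le_iff₀ (by positivity)]; linarith
  have b3 : (R:ℝ) / N ≤ ε / 8 := by
    rw [div_le_iff₀ hNp, mul_comm, ← div_le_iff₀ (by positivity)]; linarith
  have b4 : 2 ≤ (2 - b ^ 2) * (N:ℝ) := by
    rw [mul_comm, ← div_le_iff₀ hb]; linarith
  have b5 : 9 / ((N:ℝ) ^ 2 * η ^ 4 * c ^ 3) ≤ ε / 8 := by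
    have h1 : 9 / (η ^ 4 * c ^ 3) / N ≤ ε / 8 := by
      rw [div_le_iff₀ hNp]
      have := (div_le_iff₀ (by positivity : 0 < ε / 8)).1
        (show 9 / (η ^ 4 * c ^ 3) / (ε / 8) ≤ N by have := (R : ℝ); linarith)
      linarith
    refine le_trans ?_ h1
    rw [div_div]
    apply div_le_div_of_nonneg_left (by norm_num) (by positivity)
    have : 0 < η ^ 4 * c ^ 3 := by positivity
    have h2 : (N:ℝ) ≤ (N:ℝ) ^ 2 := by nlinarith
    have := mul_le_mul_of_nonneg_right h2 this.le
    linarith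
  obtain ⟨n, rfl⟩ : ∃ n, N = n + 1 := ⟨N - 1, by
    have : 1 ≤ N := by exact_mod_cast hN1
    omega⟩
  have hcast : ((n + 1 : ℕ) : ℝ) = (n : ℝ) + 1 := by push_cast; rfl
  have hxN : |x / ((n + 1 : ℕ) : ℝ)| ≤ R / ((n + 1 : ℕ) : ℝ) := by
    rw [abs_div, abs_of_pos hNp]
    exact div_le_div_of_nonneg_right hx.le hNp.le
  obtain ⟨X, hX⟩ : ∃ X, X = x / ((n + 1 : ℕ) : ℝ) + θ := ⟨_, rfl⟩
  have hXθ : |X - θ| ≤ R / ((n + 1 : ℕ) : ℝ) := by rw [hX, add_sub_cancel_right]; exact hxN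
  have hXb : |X| ≤ b - m / 2 := by
    have : |X| ≤ |X - θ| + |θ| := by
      have := abs_add_le (X - θ) θ
      rwa [sub_add_cancel] at this
    linarith
  rw [← hX]
  rw [hcast] at b4 b5
  have L_int : Integrable fun y => kerL (n + 1) y y := by
    simpa using DriftAux.kerL_int (n + 1) (by omega) 0
  have cmp := DriftAux.compare (fun y => kerL (n + 1) y y) L_int (fun y => DriftAux.kerL_nonneg _ y)
    (DriftAux.kerL_integral (n + 1) (by omega)) X δ (r / ((n + 1 : ℕ) : ℝ)) η B (by positivity) b1 hη hBp.le
    (fun y hy => by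
      rw [hB]
      refine DriftAux.lip n b hb b4 X y (by linarith) ?_
      have : |y| ≤ |X - y| + |X| := by
        have := abs_sub X (X - y)
        rw [sub_sub_cancel] at this
        linarith
      linarith)
  have st := DriftAux.stieltjes n η b X hη hη1 hb0.le hb (by linarith)
  have im0 := DriftAux.GG_zero_im (fun y => kerL (n + 1) y y) L_int (fun y => DriftAux.kerL_nonneg _ y)
    (DriftAux.kerL_integral (n + 1) (by omega)) η κ B hη hκ
    (fun y hy => by rw [hB]; exact (DriftAux.bulk n b hb b4 y (hy.trans hκb)).1)
  rw [← hc] at st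
  beta_reduce at cmp st im0
  generalize (∫ y in {y : ℝ | r / ((n + 1 : ℕ) : ℝ) ≤ |X - y|}, kerL (n + 1) y y / (X - y)) = T at *
  generalize (DriftAux.GG (fun y => kerL (n + 1) y y) η X).re = G at *
  generalize η * |(DriftAux.GG (fun y => kerL (n + 1) y y) η 0).im| = g at *
  have im1 : 2 / c * (g + η ^ 2) ≤ 2 / c * (2 * B * κ + η ^ 2 / κ ^ 2 + η ^ 2) := by
    apply mul_le_mul_of_nonneg_left _ (by positivity)
    linarith
  have eC : η ^ 2 * C1 = η ^ 2 / δ ^ 3 + 2 / c * (η ^ 2 / κ ^ 2 + η ^ 2) := by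
    rw [hC1]; ring
  have tri : |T - θ| ≤ |T - G| + |G - X| + |X - θ| := by
    have h1 := abs_sub_le T G θ
    have h2 := abs_sub_le G X θ
    linarith
  have im2 : 2 / c * (2 * B * κ + η ^ 2 / κ ^ 2 + η ^ 2) =
    2 / c * (2 * B * κ) + 2 / c * (η ^ 2 / κ ^ 2 + η ^ 2) := by ring
  linarith
end

section
/- Palm correction estimate, squared kernel (Lemma 4.5, first part): fix θ with −√2 < θ < √2 and R ∈ ℕ. With x_θ^N = x/N + θ and T^N_{r,∞}(x) = { y ∈ ℝ : r/N ≤ |x_θ^N − y| }, one has lim_{r→∞} limsup_{N→∞} sup_{|x| < R} ∫_{T^N_{r,∞}(x)} L^N(x_θ^N, y)² / ( |x_θ^N − y| · L^N(x_θ^N, x_θ^N) ) dy = 0. -/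
open Real MeasureTheory Filter Set

namespace Palm
open Polynomial

/-- Polynomial form of the physicists' Hermite polynomials. -/
noncomputable def hp : ℕ → ℝ[X]
  | 0 => 1
  | n + 1 => C 2 * X * hp n - derivative (hp n)

lemma gauss_deriv (x : ℝ) :
    HasDerivAt (fun t : ℝ => Real.exp (-t ^ 2)) (-(2 * x) * Real.exp (-x ^ 2)) x := by
  have h := ((hasDerivAt_pow 2 x).neg).exp
  refine h.congr_deriv ?_
  simp only [Pi.neg_apply]
  push_cast
  ring

lemma hp_gauss_deriv (n : ℕ) (x : ℝ) :
    HasDerivAt (fun t : ℝ => (hp n).eval t * Real.exp (-t ^ 2))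
      (-((hp (n + 1)).eval x * Real.exp (-x ^ 2))) x := by
  have h := ((hp n).hasDerivAt x).mul (gauss_deriv x)
  refine h.congr_deriv ?_
  simp only [hp, eval_sub, eval_mul, eval_C, eval_X]
  ring

lemma iter_gauss (n : ℕ) :
    iteratedDeriv n (fun t : ℝ => Real.exp (-t ^ 2)) =
      fun x => (-1 : ℝ) ^ n * ((hp n).eval x * Real.exp (-x ^ 2)) := by
  induction n with
  | zero => ext x; simp [hp]
  | succ n ih =>
    ext x
    rw [iteratedDeriv_succ, ih, ((hp_gauss_deriv n x).const_mul _).deriv]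
    ring

lemma hermiteP_eq (n : ℕ) (x : ℝ) : hermiteP n x = (hp n).eval x := by
  have h1 : Real.exp (x ^ 2) * Real.exp (-x ^ 2) = 1 := by
    rw [← Real.exp_add]; simp
  have h2 : ((-1 : ℝ) ^ n) * (-1) ^ n = 1 := by
    rw [← mul_pow]; simp
  rw [hermiteP, iter_gauss]
  calc _ = (((-1 : ℝ) ^ n) * (-1) ^ n) * (Real.exp (x ^ 2) * Real.exp (-x ^ 2))
      * (hp n).eval x := by ring
    _ = _ := by rw [h1, h2]; ring

lemma hp_derivative (n : ℕ) : derivative (hp (n + 1)) = C (2 * ((n : ℝ) + 1)) * hp n := by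
  induction n with
  | zero => simp [hp]
  | succ n ih =>
    rw [hp, derivative_sub, derivative_mul, ih]
    simp only [derivative_mul, derivative_C, derivative_X, zero_mul, zero_add, mul_one]
    rw [show hp (n + 1) = C 2 * X * hp n - derivative (hp n) from rfl]
    push_cast
    simp only [C_mul, C_add, C_1]
    ring

lemma poly_gauss_integrable (p : ℝ[X]) :
    Integrable (fun x : ℝ => p.eval x * Real.exp (-x ^ 2)) := by
  induction p using Polynomial.induction_on' with
  | add p q hp hq =>
    simp only [eval_add, add_mul]
    exact hp.add hq
  | monomial n a =>
    have h := integrable_rpow_mul_exp_neg_mul_sq (b := 1) one_pos (s := (n : ℝ))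
      (by have : (0 : ℝ) ≤ n := n.cast_nonneg
          linarith)
    have h2 := h.const_mul a
    refine h2.congr (Eventually.of_forall fun x => ?_)
    simp [mul_assoc]

lemma int_parts (p : ℝ[X]) (n : ℕ) :
    ∫ x : ℝ, (p * hp (n + 1)).eval x * Real.exp (-x ^ 2) =
      ∫ x : ℝ, (derivative p * hp n).eval x * Real.exp (-x ^ 2) := by
  have h := integral_mul_deriv_eq_deriv_mul_of_integrable
    (u := fun x => p.eval x) (v := fun t : ℝ => (hp n).eval t * Real.exp (-t ^ 2))
    (u' := fun x => (derivative p).eval x)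
    (v' := fun x => -((hp (n + 1)).eval x * Real.exp (-x ^ 2)))
    (fun x _ => p.hasDerivAt x) (fun x _ => hp_gauss_deriv n x)
    (by
      refine (poly_gauss_integrable (-(p * hp (n + 1)))).congr (Eventually.of_forall fun x => ?_)
      simp [mul_assoc])
    (by
      refine (poly_gauss_integrable (derivative p * hp n)).congr (Eventually.of_forall fun x => ?_)
      simp [mul_assoc])
    (by
      refine (poly_gauss_integrable (p * hp n)).congr (Eventually.of_forall fun x => ?_)
      simp [mul_assoc])
  simp only [mul_neg, integral_neg, neg_inj] at h
  simpa only [eval_mul, mul_assoc] using h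

lemma orth (m n : ℕ) :
    ∫ x : ℝ, (hp m * hp n).eval x * Real.exp (-x ^ 2) =
      if m = n then Real.sqrt Real.pi * 2 ^ n * (n.factorial : ℝ) else 0 := by
  induction m generalizing n with
  | zero =>
    cases n with
    | zero =>
      have := integral_gaussian 1
      simpa [hp] using this
    | succ n => rw [int_parts]; simp [hp]
  | succ m ih =>
    cases n with
    | zero => rw [mul_comm, int_parts]; simp [hp]
    | succ n =>
      rw [int_parts, hp_derivative]
      simp only [mul_assoc, eval_mul, eval_C]
      rw [integral_const_mul, integral_const_mul]
      have := ih n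
      simp only [eval_mul, mul_assoc] at this
      rw [this]
      by_cases h : m = n
      · subst h; simp [Nat.factorial_succ, pow_succ]; ring
      · simp [h]

lemma osc_mul (k l : ℕ) (x : ℝ) : osc k x * osc l x =
    ((Real.sqrt (Real.sqrt Real.pi * 2 ^ k * (k.factorial : ℝ)))⁻¹ *
    (Real.sqrt (Real.sqrt Real.pi * 2 ^ l * (l.factorial : ℝ)))⁻¹) *
    ((hp k * hp l).eval x * Real.exp (-x ^ 2)) := by
  rw [osc, osc, hermiteP_eq, hermiteP_eq, eval_mul,
    show -x ^ 2 = -x ^ 2 / 2 + -x ^ 2 / 2 by ring, Real.exp_add,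
    show (-x ^ 2 / 2 + -x ^ 2 / 2) / 2 = -x ^ 2 / 2 by ring]
  ring

lemma osc_integrable (k l : ℕ) : Integrable (fun x => osc k x * osc l x) := by
  simp only [osc_mul]
  exact (poly_gauss_integrable _).const_mul _

lemma osc_orth (k l : ℕ) : ∫ x, osc k x * osc l x = if k = l then 1 else 0 := by
  simp only [osc_mul]
  rw [integral_const_mul, orth]
  by_cases h : k = l
  · subst h
    have hpos : 0 < Real.sqrt Real.pi * 2 ^ k * (k.factorial : ℝ) := by positivity
    simp only [if_true]
    rw [← mul_inv, Real.mul_self_sqrt hpos.le, inv_mul_cancel₀ hpos.ne']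
  · simp [h]

lemma kerK_sq (N : ℕ) (u v : ℝ) : kerK N u v ^ 2 =
    ∑ k ∈ Finset.range N, ∑ l ∈ Finset.range N, (osc k u * osc l u) * (osc k v * osc l v) := by
  rw [kerK, sq, Finset.sum_mul_sum]
  refine Finset.sum_congr rfl fun k _ => Finset.sum_congr rfl fun l _ => ?_
  ring

lemma kerK_sq_integrable (N : ℕ) (u : ℝ) : Integrable (fun v => kerK N u v ^ 2) := by
  simp only [kerK_sq]
  exact integrable_finsetSum _ fun k _ => integrable_finsetSum _ fun l _ =>
    (osc_integrable k l).const_mul _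

lemma kerK_sq_integral (N : ℕ) (u : ℝ) : ∫ v, kerK N u v ^ 2 = kerK N u u := by
  simp only [kerK_sq]
  rw [integral_finsetSum _ fun k _ => integrable_finsetSum _ fun l _ =>
    (osc_integrable k l).const_mul _, kerK]
  refine Finset.sum_congr rfl fun k hk => ?_
  rw [integral_finsetSum _ fun l _ => (osc_integrable k l).const_mul _]
  simp only [integral_const_mul, osc_orth]
  simp [Finset.mem_range.1 hk]

lemma kerL_sq_integrable (N : ℕ) (hN : 0 < N) (x : ℝ) :
    Integrable (fun y => kerL N x y ^ 2) := by
  have hs : Real.sqrt (N : ℝ) ≠ 0 := by positivity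
  simp only [kerL, mul_pow]
  exact ((kerK_sq_integrable N _).comp_mul_left' hs).const_mul _

lemma kerL_sq_integral (N : ℕ) (hN : 0 < N) (x : ℝ) :
    ∫ y, kerL N x y ^ 2 = (N : ℝ)⁻¹ * kerL N x x := by
  simp only [kerL, mul_pow]
  rw [integral_const_mul,
    Measure.integral_comp_mul_left (fun v => kerK N (Real.sqrt (N : ℝ) * x) v ^ 2),
    kerK_sq_integral, abs_of_nonneg (by positivity), inv_pow,
    Real.sq_sqrt (Nat.cast_nonneg N), smul_eq_mul]

lemma kerL_diag_nonneg (N : ℕ) (x : ℝ) : 0 ≤ kerL N x x := by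
  unfold kerL kerK
  exact mul_nonneg (by positivity) (Finset.sum_nonneg fun k _ => mul_self_nonneg _)

lemma main_bound (N : ℕ) (hN : 0 < N) (a r : ℝ) (hr : 0 < r) :
    ∫ y in {y : ℝ | r / (N : ℝ) ≤ |a - y|}, kerL N a y ^ 2 / (|a - y| * kerL N a a) ≤ 1 / r := by
  have hN' : (0 : ℝ) < N := by exact_mod_cast hN
  have hL := kerL_diag_nonneg N a
  have hint : Integrable (fun y => ((N : ℝ) / r / kerL N a a) * kerL N a y ^ 2) :=
    (kerL_sq_integrable N hN a).const_mul _
  have hmeas : MeasurableSet {y : ℝ | r / (N : ℝ) ≤ |a - y|} :=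
    measurableSet_le measurable_const (by fun_prop)
  calc _ ≤ ∫ y in {y : ℝ | r / (N : ℝ) ≤ |a - y|},
        ((N : ℝ) / r / kerL N a a) * kerL N a y ^ 2 := by
        refine integral_mono_of_nonneg (Eventually.of_forall fun y => ?_) hint.integrableOn ?_
        · exact div_nonneg (sq_nonneg _) (mul_nonneg (abs_nonneg _) hL)
        · refine (ae_restrict_iff' hmeas).2 (Eventually.of_forall fun y hy => ?_)
          have hy' : r / (N : ℝ) ≤ |a - y| := hy
          have hq : 0 < r / (N : ℝ) := by positivity
          have hinv : |a - y|⁻¹ ≤ (N : ℝ) / r := by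
            rw [← inv_div]
            exact inv_anti₀ hq hy'
          calc kerL N a y ^ 2 / (|a - y| * kerL N a a)
              = |a - y|⁻¹ * (kerL N a y ^ 2 / kerL N a a) := by
                rw [div_eq_mul_inv, mul_inv]; ring
            _ ≤ (N : ℝ) / r * (kerL N a y ^ 2 / kerL N a a) :=
                mul_le_mul_of_nonneg_right hinv (div_nonneg (sq_nonneg _) hL)
            _ = _ := by ring
    _ ≤ ∫ y, ((N : ℝ) / r / kerL N a a) * kerL N a y ^ 2 :=
        setIntegral_le_integral hint (Eventually.of_forall fun y => by
          show 0 ≤ _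
          positivity)
    _ = (kerL N a a / kerL N a a) * (1 / r) := by
        rw [integral_const_mul, kerL_sq_integral N hN]
        field_simp
    _ ≤ 1 * (1 / r) := mul_le_mul_of_nonneg_right (div_self_le_one _) (by positivity)
    _ = 1 / r := one_mul _

end Palm

/-- Palm correction estimate, squared kernel (Lemma 4.5, first part). -/
theorem palm_correction_squared (θ : ℝ) (hθ1 : -Real.sqrt 2 < θ) (hθ2 : θ < Real.sqrt 2)
    (R : ℕ) (hR : 1 ≤ R) :
    ∀ ε : ℝ, 0 < ε → ∃ r0 : ℝ, ∀ r : ℝ, r0 ≤ r → ∃ N0 : ℕ, ∀ N : ℕ, N0 ≤ N →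
      ∀ x : ℝ, |x| < (R : ℝ) →
      (∫ y in {y : ℝ | r / (N : ℝ) ≤ |x / (N : ℝ) + θ - y|},
          kerL N (x / (N : ℝ) + θ) y ^ 2 /
            (|x / (N : ℝ) + θ - y| *
              kerL N (x / (N : ℝ) + θ) (x / (N : ℝ) + θ))) < ε := by
  intro ε hε
  refine ⟨1 / ε + 1, fun r hr => ⟨1, fun N hN x _ => ?_⟩⟩
  have h1 : 0 < 1 / ε := by positivity
  have hr0 : 0 < r := by linarith
  refine lt_of_le_of_lt (Palm.main_bound N hN _ r hr0) ?_
  rw [div_lt_iff₀ hr0]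
  have h2 : 1 / ε < r := by linarith
  rw [div_lt_iff₀ hε] at h2
  linarith
end
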